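/- For every n ∈ ℕ there exists a constant C(n) > 0, depending only on n, such that for every s ∈ [0, 1/n], every absolutely continuous s-concave probability measure μ on ℝⁿ, every d ∈ ℕ, every polynomial f ∈ 𝒫_d(ℝⁿ), and every φ ∈ C_b^∞(ℝ), one has ‖f − 𝔼_μ f‖_{L²(μ)}^{1/d} · ∫_{ℝⁿ} φ'(f(x)) μ(dx) ≤ C(n) · min{d, 1/s} · ‖φ‖_∞^{1/d} ‖φ'‖_∞^{1−1/d}, where 𝔼_μ f := ∫_{ℝⁿ} f dμ (with the convention min{d, 1/s} = d when s = 0). -/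

import Mathlib

/-!
The level sets `{r > t}` of a suitable density `r` of `μ` are convex (`exists_real_density`,
`convex_level`). Put `T = sup r`, fix `z` with `r z > T / 2`, and compare both factors on the left
with the oscillation of `f` about `z` on the core `{r > T / 4}`.

*Upper bound for `I = ∫ φ'(f) dμ`.* Let `y` be in the core, `M = |f y - f z|` and `e = y - z`. By
the mean value theorem `|∂_e f| ≥ M` at some point `p` of the segment `[z, y]`, which lies in the
core. Cut every level set into segments parallel to `e`. The part of a segment where `|∂_e f| ≥ ε`
splits into at most `3 d` intervals on which `∂_e f` is monotone, and integration by parts as in van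
der Corput's lemma bounds the integral of `φ'(f)` there by a multiple of `d ‖φ‖_∞ / ε`
(`interval_bound`). On the remaining set `|∂_e f| < ε` one has only `φ'(f) ≤ ‖φ'‖_∞`, but for
`ε = M u ^ (d - 1)` this set has `μ`-measure `O_n(u)`: on each ray from `p` this is a Remez-type
inequality (`sublevel_bound`), and an average over homotheties centred at `p` passes to `ℝⁿ`
(`gradient_small`). The choice `‖φ'‖_∞ M u ^ d = d ‖φ‖_∞` balances both contributions and yields
`I ≤ C(n) ‖φ'‖_∞ u` (`main_ineq`). Solved for `M`, this reads `M ≤ (R / I) ^ d` with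
`R = C(n) ‖φ‖_∞ ^ (1 / d) ‖φ'‖_∞ ^ (1 - 1 / d)` (`oscillation_le`); note `d ^ (1 / d) ≤ 2`.

*Upper bound for the variance.* Let `|f - f z| ≤ M` on the core and `r x > 0`. Concavity of `r` along
`[z, x]` puts an initial part of this segment into the core: a fraction of order
`1 / (1 + log (T / r x))` for any `s`, and a fraction `s / 2` if `s > 0`. By the growth of
polynomials of degree `d` outside an interval (`growth_bound`), `|f x - f z|` is at most
`M (C (1 + log (T / r x))) ^ d`, respectively `M (C / s) ^ d`. Integrating the square gives
`‖f - 𝔼 f‖_{L²(μ)} ≤ M (C(n) min (d, 1 / s)) ^ d` (`second_moment_logconcave`,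
`second_moment_sconcave`). In the first case the logarithm is absorbed by
`√(r x * r z) ≤ r ((x + z) / 2)`, whose right-hand side has integral `2 ^ n`.

With `M = (R / I) ^ d` the two bounds multiply to the claim.
-/

open MeasureTheory Pointwise

noncomputable section

/-- The class `C_b^∞(ℝ)` of bounded smooth functions on `ℝ`
with bounded derivatives of every order. -/
def CbSmooth (φ : ℝ → ℝ) : Prop :=
  ContDiff ℝ (⊤ : ℕ∞) φ ∧ ∀ k : ℕ, ∃ M : ℝ, ∀ t : ℝ, |iteratedDeriv k φ t| ≤ M

/-- The sup norm `‖φ‖_∞ = sup_t |φ(t)|`. -/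
def supNorm (φ : ℝ → ℝ) : ℝ := ⨆ t : ℝ, |φ t|

/-- `μ` is an `s`-concave measure on `ℝⁿ` (for `s ≥ 0`; the case `s = 0` is
log-concavity, understood in the limiting sense). -/
def IsSConcave {n : ℕ} (s : ℝ) (μ : Measure (Fin n → ℝ)) : Prop :=
  ∀ A B : Set (Fin n → ℝ), IsCompact A → IsCompact B → 0 < μ A → 0 < μ B →
    ∀ α : ℝ, 0 ≤ α → α ≤ 1 →
      (if s = 0 then μ A ^ α * μ B ^ (1 - α)
        else ENNReal.ofReal
          ((α * (μ A).toReal ^ s + (1 - α) * (μ B).toReal ^ s) ^ s⁻¹))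
        ≤ μ (α • A + (1 - α) • B)

/-! ### Growth and sublevel estimates for one-variable polynomials -/

theorem prod_dist_erase (m i : ℕ) (hi : i ≤ m) :
    ∏ j ∈ (Finset.range (m + 1)).erase i, |(i : ℝ) - j| = (i.factorial * (m - i).factorial : ℕ) := by
  have hsplit : (Finset.range (m + 1)).erase i = Finset.range i ∪ Finset.Ico (i + 1) (m + 1) := by
    ext j; simp only [Finset.mem_erase, Finset.mem_range, Finset.mem_union, Finset.mem_Ico]; omega
  have hdisj : Disjoint (Finset.range i) (Finset.Ico (i + 1) (m + 1)) := by
    rw [Finset.disjoint_left]; intro j; simp only [Finset.mem_range, Finset.mem_Ico]; omega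
  rw [hsplit, Finset.prod_union hdisj]
  push_cast
  congr 1
  · rw [← Finset.prod_range_reflect, ← Finset.prod_range_add_one_eq_factorial]
    push_cast
    refine Finset.prod_congr rfl fun j hj => ?_
    have hj' : j < i := Finset.mem_range.1 hj
    rw [show i - 1 - j = i - (j + 1) by omega, Nat.cast_sub hj']
    push_cast
    rw [show (i : ℝ) - (i - (j + 1)) = (j : ℝ) + 1 by ring, abs_of_nonneg (by positivity)]
  · rw [Finset.prod_Ico_eq_prod_range, show m + 1 - (i + 1) = m - i by omega,
      ← Finset.prod_range_add_one_eq_factorial]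
    push_cast
    refine Finset.prod_congr rfl fun j _ => ?_
    rw [show (i : ℝ) - (i + 1 + j) = -((j : ℝ) + 1) by ring, abs_neg, abs_of_nonneg (by positivity)]

theorem sum_inv_factorial (m : ℕ) :
    ∑ i ∈ Finset.range (m + 1), (1 : ℝ) / ((i.factorial * (m - i).factorial : ℕ) : ℝ)
      = 2 ^ m / m.factorial := by
  have h := Nat.sum_range_choose m
  have h2 : (∑ i ∈ Finset.range (m + 1), (m.choose i : ℝ)) = 2 ^ m := by exact_mod_cast h
  rw [← h2, Finset.sum_div]
  refine Finset.sum_congr rfl fun i hi => ?_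
  have hi' : i ≤ m := Nat.lt_succ_iff.1 (Finset.mem_range.1 hi)
  have h3 := Nat.choose_mul_factorial_mul_factorial hi'
  have h4 : (m.choose i : ℝ) * (i.factorial * (m - i).factorial : ℕ) = m.factorial := by
    rw [← h3]; push_cast; ring
  have h5 : ((i.factorial * (m - i).factorial : ℕ) : ℝ) ≠ 0 := by positivity
  rw [← h4]
  have h6 : (m.choose i : ℝ) ≠ 0 := by exact_mod_cast (Nat.choose_pos hi').ne'
  field_simp

/-- Lagrange interpolation at `m + 1` nodes `x i` that are `δ`-separated in the order of their
indices: a polynomial bounded by `u` at the nodes is controlled at distance at most `R` from them. -/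
theorem lagrange_bound (q : Polynomial ℝ) (m : ℕ) (hq : q.natDegree ≤ m) (x : ℕ → ℝ) (y R δ u : ℝ)
    (hδ : 0 < δ) (hu : 0 ≤ u)
    (hsep : ∀ i ≤ m, ∀ j ≤ m, δ * |(i : ℝ) - j| ≤ |x i - x j|)
    (hy : ∀ i ≤ m, |y - x i| ≤ R) (hval : ∀ i ≤ m, |q.eval (x i)| ≤ u) :
    |q.eval y| ≤ u * ((2 * R / δ) ^ m / m.factorial) := by
  have hR : 0 ≤ R := (abs_nonneg _).trans (hy 0 (Nat.zero_le _))
  have hinj : Set.InjOn x (Finset.range (m + 1) : Set ℕ) := by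
    intro i hi j hj hij
    have hi' : i ≤ m := by simpa [Nat.lt_succ_iff] using hi
    have hj' : j ≤ m := by simpa [Nat.lt_succ_iff] using hj
    have h := hsep i hi' j hj'
    rw [hij, sub_self, abs_zero] at h
    by_contra hne
    have : 0 < |(i : ℝ) - j| := abs_pos.2 (sub_ne_zero.2 (by exact_mod_cast hne))
    nlinarith
  have hdeg : q.degree < (Finset.range (m + 1)).card := by
    rw [Finset.card_range]
    exact (Polynomial.degree_le_of_natDegree_le hq).trans_lt (by exact_mod_cast Nat.lt_succ_self m)
  have hint := Lagrange.eq_interpolate hinj hdeg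
  have hbasis : ∀ i ∈ Finset.range (m + 1),
      |(Lagrange.basis (Finset.range (m + 1)) x i).eval y|
        ≤ (R / δ) ^ m * (1 / ((i.factorial * (m - i).factorial : ℕ) : ℝ)) := by
    intro i hi
    have hi' : i ≤ m := Nat.lt_succ_iff.1 (Finset.mem_range.1 hi)
    rw [Lagrange.basis, Polynomial.eval_prod, Finset.abs_prod, ← prod_dist_erase m i hi']
    have hcard : ((Finset.range (m + 1)).erase i).card = m := by
      rw [Finset.card_erase_of_mem hi, Finset.card_range]; rfl
    rw [one_div, ← Finset.prod_inv_distrib]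
    nth_rewrite 2 [← hcard]
    rw [← Finset.prod_const, ← Finset.prod_mul_distrib]
    refine Finset.prod_le_prod (fun _ _ => abs_nonneg _) fun j hj => ?_
    have hj' : j ≤ m := Nat.lt_succ_iff.1 (Finset.mem_range.1 (Finset.mem_of_mem_erase hj))
    have hij : i ≠ j := (Finset.ne_of_mem_erase hj).symm
    have hpos : 0 < |(i : ℝ) - j| := abs_pos.2 (sub_ne_zero.2 (by exact_mod_cast hij))
    have h1 := hsep i hi' j hj'
    have h2 := hy j hj'
    simp only [Lagrange.basisDivisor, Polynomial.eval_mul, Polynomial.eval_C, Polynomial.eval_sub,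
      Polynomial.eval_X, abs_mul, abs_inv]
    have h3 : 0 < δ * |(i : ℝ) - j| := by positivity
    calc |x i - x j|⁻¹ * |y - x j| ≤ (δ * |(i : ℝ) - j|)⁻¹ * R := by gcongr
      _ = R / δ * |(i : ℝ) - j|⁻¹ := by rw [mul_inv]; ring
  rw [hint, Lagrange.interpolate_apply, Polynomial.eval_finsetSum]
  calc |∑ i ∈ Finset.range (m + 1), (Polynomial.C (q.eval (x i)) *
        Lagrange.basis (Finset.range (m + 1)) x i).eval y|
      ≤ ∑ i ∈ Finset.range (m + 1), u * ((R / δ) ^ m *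
          (1 / ((i.factorial * (m - i).factorial : ℕ) : ℝ))) := by
        refine (Finset.abs_sum_le_sum_abs _ _).trans (Finset.sum_le_sum fun i hi => ?_)
        rw [Polynomial.eval_mul, Polynomial.eval_C, abs_mul]
        exact mul_le_mul (hval i (Nat.lt_succ_iff.1 (Finset.mem_range.1 hi))) (hbasis i hi)
          (abs_nonneg _) hu
    _ = u * ((2 * R / δ) ^ m / m.factorial) := by
        rw [← Finset.mul_sum, ← Finset.mul_sum, sum_inv_factorial]
        rw [mul_div_assoc, mul_pow]; ring

theorem pow_self_le (m : ℕ) : (m : ℝ) ^ m ≤ Real.exp 1 ^ m * m.factorial := by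
  have h := Real.pow_div_factorial_le_exp (m : ℝ) (Nat.cast_nonneg m) m
  rw [div_le_iff₀ (by positivity)] at h
  rwa [← Real.exp_nat_mul, mul_one]

/-- Growth of a polynomial outside an interval, by interpolation at equally spaced nodes of
`[0, l]`. -/
theorem growth_bound (q : Polynomial ℝ) (d : ℕ) (hd : 0 < d) (hq : q.natDegree ≤ d) (l M : ℝ)
    (hl : 0 < l) (hl1 : l ≤ 1) (hM : 0 ≤ M) (h : ∀ t, 0 ≤ t → t ≤ l → |q.eval t| ≤ M) :
    |q.eval 1| ≤ M * (2 * Real.exp 1 / l) ^ d := by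
  have hd' : (0 : ℝ) < d := by exact_mod_cast hd
  have := lagrange_bound q d hq (fun i => l * i / d) 1 1 (l / d) M (by positivity) hM
    (by
      intro i _ j _
      rw [show l * (i : ℝ) / d - l * j / d = l / d * (i - j) by ring, abs_mul,
        abs_of_pos (by positivity : 0 < l / d)])
    (by
      intro i hi
      have : (i : ℝ) ≤ d := by exact_mod_cast hi
      have h1 : l * (i : ℝ) / d ≤ 1 := by
        rw [div_le_one hd']; nlinarith [(Nat.cast_nonneg i : (0 : ℝ) ≤ i)]
      have h0 : 0 ≤ l * (i : ℝ) / d := by positivity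
      rw [abs_le]; constructor <;> linarith)
    (by
      intro i hi
      have : (i : ℝ) ≤ d := by exact_mod_cast hi
      apply h
      · positivity
      · rw [div_le_iff₀ hd']; nlinarith)
  refine this.trans (mul_le_mul_of_nonneg_left ?_ hM)
  rw [div_le_iff₀ (by positivity)]
  have h2 := pow_self_le d
  calc (2 * 1 / (l / d)) ^ d = (2 / l) ^ d * (d : ℝ) ^ d := by
        rw [← mul_pow]; congr 1; field_simp
    _ ≤ (2 / l) ^ d * (Real.exp 1 ^ d * d.factorial) := by gcongr
    _ = (2 * Real.exp 1 / l) ^ d * d.factorial := by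
        rw [← mul_assoc, ← mul_pow]; congr 2; ring

/-- A set of reals of measure greater than `m * δ` contains `m + 1` points with consecutive gaps at
least `δ`: take a point close to the infimum, discard everything up to `δ` to its right, and
repeat. -/
theorem exists_separated (δ : ℝ) (hδ : 0 < δ) : ∀ (m : ℕ) (E : Set ℝ), BddBelow E →
    ENNReal.ofReal (m * δ) < volume E →
    ∃ x : ℕ → ℝ, (∀ i ≤ m, x i ∈ E) ∧ ∀ i ≤ m, ∀ j ≤ m, i ≤ j → δ * ((j : ℝ) - i) ≤ x j - x i := by
  intro m
  induction m with
  | zero =>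
    intro E _ h
    obtain ⟨y, hy⟩ : E.Nonempty := by
      rw [Set.nonempty_iff_ne_empty]; rintro rfl; simp at h
    refine ⟨fun _ => y, fun _ _ => hy, fun i hi j hj _ => ?_⟩
    obtain rfl := Nat.le_zero.1 hi
    obtain rfl := Nat.le_zero.1 hj
    simp
  | succ m ih =>
    intro E hb h
    have hne : E.Nonempty := by
      rw [Set.nonempty_iff_ne_empty]; rintro rfl; simp at h
    obtain ⟨η, hη, hη2⟩ : ∃ η : ℝ, 0 < η ∧ ENNReal.ofReal (((m + 1 : ℕ) : ℝ) * δ + η) < volume E := by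
      obtain ⟨c, hc1, hc2⟩ := ENNReal.lt_iff_exists_nnreal_btwn.1 h
      rw [ENNReal.ofReal_lt_coe_iff (by positivity)] at hc1
      refine ⟨c - ((m + 1 : ℕ) : ℝ) * δ, by linarith, ?_⟩
      rw [add_sub_cancel, ENNReal.ofReal_coe_nnreal]; exact hc2
    obtain ⟨y, hyE, hy⟩ := exists_lt_of_csInf_lt hne (lt_add_of_pos_right (sInf E) hη)
    have hsub : E ⊆ (E ∩ Set.Ici (y + δ)) ∪ Set.Icc (sInf E) (y + δ) := by
      intro t ht
      rcases le_total (y + δ) t with h1 | h1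
      · exact Or.inl ⟨ht, h1⟩
      · exact Or.inr ⟨csInf_le hb ht, h1⟩
    have hmeas : ENNReal.ofReal (m * δ) < volume (E ∩ Set.Ici (y + δ)) := by
      by_contra hcon
      push Not at hcon
      have h1 : volume E ≤ ENNReal.ofReal (m * δ) + ENNReal.ofReal (y + δ - sInf E) := by
        refine (measure_mono hsub).trans ((measure_union_le _ _).trans ?_)
        rw [Real.volume_Icc]
        gcongr
      rw [← ENNReal.ofReal_add (by positivity) (by linarith [csInf_le hb hyE])] at h1
      have h2 := hη2.trans_le h1
      rw [ENNReal.ofReal_lt_ofReal_iff_of_nonneg (by positivity)] at h2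
      push_cast at h2
      linarith
    obtain ⟨x, hx, hsep⟩ := ih _ (hb.mono Set.inter_subset_left) hmeas
    refine ⟨fun i => if i = 0 then y else x (i - 1), ?_, ?_⟩
    · intro i hi
      rcases Nat.eq_zero_or_pos i with rfl | h0
      · simpa using hyE
      · simp only [h0.ne', if_false]; exact (hx (i - 1) (by omega)).1
    · intro i hi j hj hij
      rcases Nat.eq_zero_or_pos i with rfl | h0
      · rcases Nat.eq_zero_or_pos j with rfl | h1
        · simp
        · simp only [h1.ne', if_false, if_true]
          have h2 := hsep 0 (Nat.zero_le _) (j - 1) (by omega) (Nat.zero_le _)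
          have h3 : y + δ ≤ x 0 := (hx 0 (Nat.zero_le _)).2
          rw [Nat.cast_sub h1] at h2
          push_cast at h2 ⊢
          linarith
      · have h1 : 0 < j := by omega
        simp only [h0.ne', h1.ne', if_false]
        have h2 := hsep (i - 1) (by omega) (j - 1) (by omega) (by omega)
        rw [Nat.cast_sub h1, Nat.cast_sub h0] at h2
        linarith

/-- A Remez-type inequality: if `|q 0| ≥ M`, then `|q| < M * u ^ m` only on a small part of `[0, 1]`.
Otherwise that part would contain well separated nodes, and interpolating at them would give
`|q 0| < M`. -/
theorem sublevel_bound (q : Polynomial ℝ) (m : ℕ) (hq : q.natDegree ≤ m) (M u : ℝ)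
    (hM : 0 < M) (hM0 : M ≤ |q.eval 0|) (hu : 0 < u) :
    volume {t : ℝ | t ∈ Set.Icc (0 : ℝ) 1 ∧ |q.eval t| < M * u ^ m}
      ≤ ENNReal.ofReal (2 * Real.exp 1 * u) := by
  rcases Nat.eq_zero_or_pos m with rfl | hm
  · have : {t : ℝ | t ∈ Set.Icc (0 : ℝ) 1 ∧ |q.eval t| < M * u ^ 0} = ∅ := by
      rw [Set.eq_empty_iff_forall_notMem]
      rintro t ⟨_, ht⟩
      rw [Polynomial.eq_C_of_natDegree_le_zero hq] at hM0 ht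
      simp only [Polynomial.eval_C, pow_zero, mul_one] at hM0 ht
      linarith
    rw [this]; simp
  have hm' : (0 : ℝ) < m := by exact_mod_cast hm
  by_contra hcon
  push Not at hcon
  have he : (0 : ℝ) < Real.exp 1 := Real.exp_pos 1
  obtain ⟨c, hc1, hc2⟩ := ENNReal.lt_iff_exists_nnreal_btwn.1 hcon
  rw [ENNReal.ofReal_lt_coe_iff (by positivity)] at hc1
  have hcpos : (0 : ℝ) < c := lt_trans (by positivity) hc1
  obtain ⟨x, hx, hsep⟩ := exists_separated (c / m) (by positivity) m
    {t : ℝ | t ∈ Set.Icc (0 : ℝ) 1 ∧ |q.eval t| < M * u ^ m} ⟨0, fun t ht => ht.1.1⟩ (by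
      rw [mul_div_cancel₀ _ hm'.ne', ENNReal.ofReal_coe_nnreal]; exact hc2)
  have hb := lagrange_bound q m hq x 0 1 (c / m) (M * u ^ m) (by positivity) (by positivity)
    (by
      intro i hi j hj
      rcases le_total i j with hij | hij
      · have := hsep i hi j hj hij
        rw [abs_sub_comm, abs_sub_comm (x i)]
        rw [abs_of_nonneg (sub_nonneg.2 (by exact_mod_cast hij) : (0 : ℝ) ≤ j - i)]
        exact this.trans (le_abs_self _)
      · have := hsep j hj i hi hij
        rw [abs_of_nonneg (sub_nonneg.2 (by exact_mod_cast hij) : (0 : ℝ) ≤ i - j)]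
        exact this.trans (le_abs_self _))
    (by
      intro i hi
      have := (hx i hi).1
      rw [zero_sub, abs_neg, abs_of_nonneg this.1]; exact this.2)
    (fun i hi => (hx i hi).2.le)
  have h1 : M ≤ M * (u ^ m * ((2 * 1 / (c / m)) ^ m / m.factorial)) := by
    rw [← mul_assoc]; exact hM0.trans hb
  have h2 : u ^ m * ((2 * 1 / (c / m)) ^ m / m.factorial) < 1 := by
    rw [← mul_div_assoc, div_lt_one (by positivity)]
    calc u ^ m * (2 * 1 / (c / m)) ^ m = (2 * u / c) ^ m * (m : ℝ) ^ m := by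
          rw [← mul_pow, ← mul_pow]; congr 1; field_simp
      _ ≤ (2 * u / c) ^ m * (Real.exp 1 ^ m * m.factorial) := by gcongr; exact pow_self_le m
      _ = (2 * Real.exp 1 * u / c) ^ m * m.factorial := by
          rw [← mul_assoc, ← mul_pow]; congr 2; ring
      _ < 1 * m.factorial := by
          gcongr
          exact pow_lt_one₀ (by positivity) ((div_lt_one hcpos).2 hc1) hm.ne'
      _ = m.factorial := one_mul _
  nlinarith

/-! ### A one-dimensional oscillatory estimate -/

/-- A polynomial without roots in `(α, β)` has constant sign on `[α, β]`; the zero polynomial, whose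
`roots` are empty, falls under the first alternative. -/
theorem sign_of_no_roots (P : Polynomial ℝ) (α β : ℝ)
    (h : ∀ c ∈ P.roots, c ∉ Set.Ioo α β) :
    (∀ t ∈ Set.Icc α β, 0 ≤ P.eval t) ∨
      ((∀ t ∈ Set.Icc α β, P.eval t ≤ 0) ∧ ∀ t ∈ Set.Ioo α β, P.eval t < 0) := by
  rcases eq_or_ne P 0 with rfl | hP
  · left; simp
  have hne : ∀ t ∈ Set.Ioo α β, P.eval t ≠ 0 := fun t ht h0 =>
    h t ((Polynomial.mem_roots hP).2 h0) ht
  have hmain : (∀ t ∈ Set.Icc α β, 0 ≤ P.eval t) ∨ (∀ t ∈ Set.Icc α β, P.eval t ≤ 0) := by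
    by_contra hcon
    push Not at hcon
    obtain ⟨⟨x, hx, hx0⟩, y, hy, hy0⟩ := hcon
    have hcont : ContinuousOn (fun t => P.eval t) (Set.uIcc x y) := P.continuous.continuousOn
    have h0 : (0 : ℝ) ∈ Set.uIcc (P.eval x) (P.eval y) := by
      rw [Set.mem_uIcc]; left; exact ⟨hx0.le, hy0.le⟩
    obtain ⟨c, hc, hc0⟩ := intermediate_value_uIcc hcont h0
    simp only at hc0
    have hcx : c ≠ x := by rintro rfl; linarith
    have hcy : c ≠ y := by rintro rfl; linarith
    refine hne c ?_ hc0
    rw [Set.mem_uIcc] at hc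
    rcases hc with hc | hc
    · exact ⟨hx.1.trans_lt (lt_of_le_of_ne hc.1 hcx.symm), (lt_of_le_of_ne hc.2 hcy).trans_le hy.2⟩
    · exact ⟨hy.1.trans_lt (lt_of_le_of_ne hc.1 hcy.symm), (lt_of_le_of_ne hc.2 hcx).trans_le hx.2⟩
  rcases hmain with h1 | h1
  · exact Or.inl h1
  · exact Or.inr ⟨h1, fun t ht => lt_of_le_of_ne (h1 t (Set.Ioo_subset_Icc_self ht)) (hne t ht)⟩

/-- Van der Corput's argument on an interval where `p = f'` is monotone and `|p| ≥ ε`: write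
`φ'(f) = (φ ∘ f)' / p` and integrate by parts. The sign `σ` records whether `p` increases or
decreases; as `(1 / p)'` has constant sign, its total variation telescopes. -/
theorem monotone_piece (φ : ℝ → ℝ) (hφ : ContDiff ℝ 1 φ) (a ε : ℝ) (hε : 0 < ε)
    (ha : ∀ t, |φ t| ≤ a) (f : Polynomial ℝ) (α β : ℝ) (hαβ : α ≤ β) (σ : ℝ)
    (hσ : σ = 1 ∨ σ = -1)
    (hlow : ∀ t ∈ Set.Icc α β, ε ≤ |f.derivative.eval t|)
    (hmono : ∀ t ∈ Set.Icc α β, 0 ≤ σ * f.derivative.derivative.eval t) :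
    ∫ t in α..β, deriv φ (f.eval t) ≤ 4 * a / ε := by
  have ha0 : 0 ≤ a := (abs_nonneg _).trans (ha 0)
  set p := f.derivative with hp
  have hne : ∀ t ∈ Set.Icc α β, p.eval t ≠ 0 := fun t ht h0 => by
    have := hlow t ht; rw [h0, abs_zero] at this; linarith
  have hinv : ∀ t ∈ Set.Icc α β, |(p.eval t)⁻¹| ≤ 1 / ε := fun t ht => by
    rw [abs_inv, one_div]; exact inv_anti₀ hε (hlow t ht)
  have hdφ : Continuous (deriv φ) := hφ.continuous_deriv le_rfl
  have hcinv : ContinuousOn (fun t => (p.eval t)⁻¹) (Set.Icc α β) :=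
    p.continuous.continuousOn.inv₀ hne
  have hd1 : ∀ t ∈ Set.Icc α β,
      HasDerivAt (fun t => (p.eval t)⁻¹) (-(p.derivative.eval t) / (p.eval t) ^ 2) t :=
    fun t ht => (p.hasDerivAt t).inv (hne t ht)
  have hd2 : ∀ t ∈ Set.Icc α β,
      HasDerivAt (fun t => φ (f.eval t) * (p.eval t)⁻¹)
        (deriv φ (f.eval t) * p.eval t * (p.eval t)⁻¹ +
          φ (f.eval t) * (-(p.derivative.eval t) / (p.eval t) ^ 2)) t := fun t ht =>
    (((hφ.differentiable one_ne_zero _).hasDerivAt.comp t (f.hasDerivAt t)).mul (hd1 t ht))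
  have hc1 : ContinuousOn (fun t => -(p.derivative.eval t) / (p.eval t) ^ 2) (Set.Icc α β) :=
    (p.derivative.continuous.neg.continuousOn).div ((p.continuous.pow 2).continuousOn)
      fun t ht => pow_ne_zero 2 (hne t ht)
  have hcφ : Continuous (fun t => φ (f.eval t)) := hφ.continuous.comp f.continuous
  have hcdφ : Continuous (fun t => deriv φ (f.eval t)) := hdφ.comp f.continuous
  have hc2 : ContinuousOn (fun t => φ (f.eval t) * (-(p.derivative.eval t) / (p.eval t) ^ 2))
      (Set.Icc α β) := hcφ.continuousOn.mul hc1
  have hui : Set.uIcc α β = Set.Icc α β := Set.uIcc_of_le hαβ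
  have hi1 : IntervalIntegrable (fun t => -(p.derivative.eval t) / (p.eval t) ^ 2) volume α β :=
    ContinuousOn.intervalIntegrable (hui ▸ hc1)
  have hi2 : IntervalIntegrable
      (fun t => φ (f.eval t) * (-(p.derivative.eval t) / (p.eval t) ^ 2)) volume α β :=
    ContinuousOn.intervalIntegrable (hui ▸ hc2)
  have hi3 : IntervalIntegrable (fun t => deriv φ (f.eval t)) volume α β :=
    hcdφ.intervalIntegrable _ _
  have hmemα : α ∈ Set.Icc α β := ⟨le_rfl, hαβ⟩
  have hmemβ : β ∈ Set.Icc α β := ⟨hαβ, le_rfl⟩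
  have e1 : ∫ t in α..β, (deriv φ (f.eval t) +
      φ (f.eval t) * (-(p.derivative.eval t) / (p.eval t) ^ 2)) =
      φ (f.eval β) * (p.eval β)⁻¹ - φ (f.eval α) * (p.eval α)⁻¹ := by
    refine intervalIntegral.integral_eq_sub_of_hasDerivAt
      (f := fun t => φ (f.eval t) * (p.eval t)⁻¹) ?_ (hi3.add hi2)
    intro t ht
    rw [hui] at ht
    have := hd2 t ht
    rwa [mul_inv_cancel_right₀ (hne t ht)] at this
  have e2 : ∫ t in α..β, -(p.derivative.eval t) / (p.eval t) ^ 2 =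
      (p.eval β)⁻¹ - (p.eval α)⁻¹ := by
    refine intervalIntegral.integral_eq_sub_of_hasDerivAt (f := fun t => (p.eval t)⁻¹) ?_ hi1
    intro t ht; rw [hui] at ht; exact hd1 t ht
  rw [intervalIntegral.integral_add hi3 hi2] at e1
  have e3 : -∫ t in α..β, φ (f.eval t) * (-(p.derivative.eval t) / (p.eval t) ^ 2) ≤ 2 * a / ε := by
    have h1 : -∫ t in α..β, φ (f.eval t) * (-(p.derivative.eval t) / (p.eval t) ^ 2) ≤
        ∫ t in α..β, (-σ * a) * (-(p.derivative.eval t) / (p.eval t) ^ 2) := by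
      rw [← intervalIntegral.integral_neg]
      refine intervalIntegral.integral_mono_on hαβ hi2.neg (hi1.const_mul _) ?_
      intro t ht
      have h2 : 0 ≤ σ * p.derivative.eval t / (p.eval t) ^ 2 :=
        div_nonneg (hmono t ht) (sq_nonneg _)
      have h3 := abs_le.1 (ha (f.eval t))
      have h4 : -(φ (f.eval t) * (-(p.derivative.eval t) / (p.eval t) ^ 2)) =
          (φ (f.eval t) * σ) * (σ * p.derivative.eval t / (p.eval t) ^ 2) := by
        rcases hσ with rfl | rfl <;> ring
      have h5 : -σ * a * (-(p.derivative.eval t) / (p.eval t) ^ 2) =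
          a * (σ * p.derivative.eval t / (p.eval t) ^ 2) := by ring
      rw [h4, h5]
      refine mul_le_mul_of_nonneg_right ?_ h2
      rcases hσ with rfl | rfl <;> linarith
    rw [intervalIntegral.integral_const_mul, e2] at h1
    refine h1.trans ?_
    have h6 := abs_le.1 (hinv α hmemα)
    have h7 := abs_le.1 (hinv β hmemβ)
    rw [show 2 * a / ε = a * (1 / ε + 1 / ε) by ring]
    rcases hσ with rfl | rfl
    · rw [show -1 * a * ((p.eval β)⁻¹ - (p.eval α)⁻¹) = a * ((p.eval α)⁻¹ - (p.eval β)⁻¹) by ring]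
      exact mul_le_mul_of_nonneg_left (by linarith) ha0
    · rw [show - -1 * a * ((p.eval β)⁻¹ - (p.eval α)⁻¹) = a * ((p.eval β)⁻¹ - (p.eval α)⁻¹) by ring]
      exact mul_le_mul_of_nonneg_left (by linarith) ha0
  have e4 : ∀ t ∈ Set.Icc α β, |φ (f.eval t) * (p.eval t)⁻¹| ≤ a / ε := fun t ht => by
    rw [abs_mul, div_eq_mul_one_div]
    exact mul_le_mul (ha _) (hinv t ht) (abs_nonneg _) ha0
  have h8 := abs_le.1 (e4 α hmemα)
  have h9 := abs_le.1 (e4 β hmemβ)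
  have h10 : 4 * a / ε = a / ε + a / ε + 2 * a / ε := by ring
  linarith

/-- The estimate of `interval_bound` on an interval whose interior contains at most `N` points of
`S`, by induction on `N`. Since `S` contains the roots of `f''` and of `f'² - ε²`, between
consecutive points of `S` either `f'` is monotone with `|f'| ≥ ε`, so `monotone_piece` applies, or
`|f'| < ε` throughout, and then the integrand is at most `2 b`. -/
theorem interval_bound_aux (φ : ℝ → ℝ) (hφ : ContDiff ℝ 1 φ) (a b ε : ℝ) (hε : 0 < ε)
    (ha : ∀ t, |φ t| ≤ a) (hb : ∀ t, |deriv φ t| ≤ b) (f : Polynomial ℝ) (S : Finset ℝ)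
    (hS1 : ∀ c ∈ f.derivative.derivative.roots, c ∈ S)
    (hS2 : ∀ c ∈ (f.derivative ^ 2 - Polynomial.C (ε ^ 2)).roots, c ∈ S) :
    ∀ (N : ℕ) (α β : ℝ), α ≤ β → (S.filter (· ∈ Set.Ioo α β)).card ≤ N →
    ∫⁻ t in Set.Ioc α β, ENNReal.ofReal (b + deriv φ (f.eval t)) ≤
      (N + 1) * ENNReal.ofReal (4 * a / ε) +
      ∫⁻ t in Set.Ioc α β, ENNReal.ofReal b *
        (1 + {t | |f.derivative.eval t| < ε}.indicator 1 t) := by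
  have ha0 : 0 ≤ a := (abs_nonneg _).trans (ha 0)
  have hb0 : 0 ≤ b := (abs_nonneg _).trans (hb 0)
  have hcdφ : Continuous (fun t => deriv φ (f.eval t)) :=
    (hφ.continuous_deriv le_rfl).comp f.continuous
  have hbase : ∀ α β : ℝ, α ≤ β → (∀ c ∈ S, c ∉ Set.Ioo α β) →
    ∫⁻ t in Set.Ioc α β, ENNReal.ofReal (b + deriv φ (f.eval t)) ≤
      ENNReal.ofReal (4 * a / ε) +
      ∫⁻ t in Set.Ioc α β, ENNReal.ofReal b *
        (1 + {t | |f.derivative.eval t| < ε}.indicator 1 t) := by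
    intro α β hαβ hno
    rcases sign_of_no_roots (f.derivative ^ 2 - Polynomial.C (ε ^ 2)) α β
      (fun c hc => hno c (hS2 c hc)) with h | h
    · have hlow : ∀ t ∈ Set.Icc α β, ε ≤ |f.derivative.eval t| := by
        intro t ht
        have := h t ht
        simp only [Polynomial.eval_sub, Polynomial.eval_pow, Polynomial.eval_C] at this
        exact (abs_le_of_sq_le_sq' (by rw [sq_abs]; linarith) (abs_nonneg _)).2
      have hσ : ∃ σ : ℝ, (σ = 1 ∨ σ = -1) ∧
          ∀ t ∈ Set.Icc α β, 0 ≤ σ * f.derivative.derivative.eval t := by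
        rcases sign_of_no_roots f.derivative.derivative α β
          (fun c hc => hno c (hS1 c hc)) with h' | h'
        · exact ⟨1, Or.inl rfl, fun t ht => by simpa using h' t ht⟩
        · exact ⟨-1, Or.inr rfl, fun t ht => by simpa using h'.1 t ht⟩
      obtain ⟨σ, hσ1, hσ2⟩ := hσ
      have hm := monotone_piece φ hφ a ε hε ha f α β hαβ σ hσ1 hlow hσ2
      rw [← ofReal_integral_eq_lintegral_ofReal]
      · rw [← intervalIntegral.integral_of_le hαβ, intervalIntegral.integral_add
          intervalIntegrable_const (hcdφ.intervalIntegrable _ _), intervalIntegral.integral_const,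
          smul_eq_mul]
        calc ENNReal.ofReal ((β - α) * b + ∫ t in α..β, deriv φ (f.eval t))
            ≤ ENNReal.ofReal (4 * a / ε + b * (β - α)) := by
              apply ENNReal.ofReal_le_ofReal; linarith
          _ = ENNReal.ofReal (4 * a / ε) + ENNReal.ofReal b * volume (Set.Ioc α β) := by
              rw [ENNReal.ofReal_add (by positivity) (mul_nonneg hb0 (sub_nonneg.2 hαβ)),
                ENNReal.ofReal_mul hb0, Real.volume_Ioc]
          _ ≤ _ := by
              gcongr
              rw [← setLIntegral_const]
              refine lintegral_mono fun t => ?_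
              exact le_mul_of_one_le_right' (le_self_add)
      · exact (continuous_const.add hcdφ).integrableOn_Ioc
      · refine Filter.Eventually.of_forall fun t => ?_
        have := abs_le.1 (hb (f.eval t))
        show 0 ≤ b + deriv φ (f.eval t)
        linarith
    · refine le_trans ?_ le_add_self
      rw [← restrict_Ioo_eq_restrict_Ioc]
      refine setLIntegral_mono' measurableSet_Ioo fun t ht => ?_
      have h1 := h.2 t ht
      simp only [Polynomial.eval_sub, Polynomial.eval_pow, Polynomial.eval_C] at h1
      have h2 : |f.derivative.eval t| < ε := abs_lt_of_sq_lt_sq (by linarith) hε.le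
      have h3 : t ∈ {t | |f.derivative.eval t| < ε} := h2
      rw [Set.indicator_of_mem h3, Pi.one_apply, one_add_one_eq_two,
        ← ENNReal.ofReal_ofNat, ← ENNReal.ofReal_mul hb0]
      apply ENNReal.ofReal_le_ofReal
      have := (abs_le.1 (hb (f.eval t))).2
      linarith
  intro N
  induction N with
  | zero =>
    intro α β hαβ hcard
    have := hbase α β hαβ (fun c hc hc' => by
      have h1 : S.filter (· ∈ Set.Ioo α β) = ∅ := Finset.card_eq_zero.1 (Nat.le_zero.1 hcard)
      have h2 : c ∈ S.filter (· ∈ Set.Ioo α β) := Finset.mem_filter.2 ⟨hc, hc'⟩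
      rw [h1] at h2; simp at h2)
    simpa using this
  | succ N ih =>
    intro α β hαβ hcard
    by_cases hex : ∃ c ∈ S, c ∈ Set.Ioo α β
    · -- split at the smallest point of `S` in `(α, β)`
      obtain ⟨c0, hc0, hc0'⟩ := hex
      obtain ⟨c, hc, hcmin⟩ := (S.filter (· ∈ Set.Ioo α β)).exists_min_image id
        ⟨c0, Finset.mem_filter.2 ⟨hc0, hc0'⟩⟩
      obtain ⟨hcS, hcI⟩ := Finset.mem_filter.1 hc
      have h1 := hbase α c hcI.1.le (fun x hx hx' => by
        have := hcmin x (Finset.mem_filter.2 ⟨hx, hx'.1, hx'.2.trans hcI.2⟩)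
        exact absurd hx'.2 (not_lt.2 this))
      have h2 := ih c β hcI.2.le (by
        have hss : S.filter (· ∈ Set.Ioo c β) ⊆ (S.filter (· ∈ Set.Ioo α β)).erase c := by
          intro x hx
          obtain ⟨hxS, hxI⟩ := Finset.mem_filter.1 hx
          exact Finset.mem_erase.2 ⟨hxI.1.ne', Finset.mem_filter.2
            ⟨hxS, hcI.1.trans hxI.1, hxI.2⟩⟩
        have := Finset.card_le_card hss
        rw [Finset.card_erase_of_mem hc] at this
        omega)
      rw [← Set.Ioc_union_Ioc_eq_Ioc hcI.1.le hcI.2.le]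
      rw [lintegral_union measurableSet_Ioc (Set.Ioc_disjoint_Ioc_of_le le_rfl),
        lintegral_union measurableSet_Ioc (Set.Ioc_disjoint_Ioc_of_le le_rfl)]
      refine (add_le_add h1 h2).trans (le_of_eq ?_)
      push_cast
      ring
    · push Not at hex
      refine (hbase α β hαβ hex).trans ?_
      gcongr
      refine le_mul_of_one_le_left' ?_
      exact le_add_self

/-- One-dimensional bound for the integral of `b + φ'(f)` over a subinterval of `[0, 1]`. The shift
by `b ≥ |φ'|` makes the integrand nonnegative, so that `∫⁻` can be used; its cost `b * |J|` appears
on the right as the first summand of the last integral. -/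
theorem interval_bound (φ : ℝ → ℝ) (hφ : ContDiff ℝ 1 φ) (a b ε : ℝ) (hε : 0 < ε)
    (ha : ∀ t, |φ t| ≤ a) (hb : ∀ t, |deriv φ t| ≤ b) (f : Polynomial ℝ) (d : ℕ) (hd : 0 < d)
    (hf : f.natDegree ≤ d) (J : Set ℝ) (hJ : J.OrdConnected) (hJ1 : J ⊆ Set.Icc 0 1) :
    ∫⁻ t in J, ENNReal.ofReal (b + deriv φ (f.eval t)) ≤
      ENNReal.ofReal (12 * d * a / ε) +
      ∫⁻ t in J, ENNReal.ofReal b *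
        (1 + {t | |f.derivative.eval t| < ε}.indicator 1 t) := by
  rcases J.eq_empty_or_nonempty with rfl | hne
  · simp
  have hbb : BddBelow J := ⟨0, fun t ht => (hJ1 ht).1⟩
  have hba : BddAbove J := ⟨1, fun t ht => (hJ1 ht).2⟩
  have hle : sInf J ≤ sSup J := csInf_le_csSup hne hbb hba
  have hsub1 : Set.Ioo (sInf J) (sSup J) ⊆ J := by
    intro t ht
    obtain ⟨x, hx, hxt⟩ := exists_lt_of_csInf_lt hne ht.1
    obtain ⟨y, hy, hty⟩ := exists_lt_of_lt_csSup hne ht.2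
    exact hJ.out hx hy ⟨hxt.le, hty.le⟩
  have hsub2 : J ⊆ Set.Icc (sInf J) (sSup J) := fun t ht => ⟨csInf_le hbb ht, le_csSup hba ht⟩
  have hae : J =ᵐ[volume] Set.Ioc (sInf J) (sSup J) := by
    apply Filter.EventuallyLE.antisymm
    · exact (LE.le.eventuallyLE hsub2).trans Ioc_ae_eq_Icc.symm.le
    · exact Ioo_ae_eq_Ioc.symm.le.trans (LE.le.eventuallyLE hsub1)
  rw [Measure.restrict_congr_set hae]
  have ha0 : 0 ≤ a := (abs_nonneg _).trans (ha 0)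
  set P1 := f.derivative.derivative
  set P2 := f.derivative ^ 2 - Polynomial.C (ε ^ 2)
  set S := P1.roots.toFinset ∪ P2.roots.toFinset
  have hd1 : f.derivative.natDegree ≤ d - 1 :=
    (Polynomial.natDegree_derivative_le f).trans (by omega)
  have hd2 : P1.natDegree ≤ d - 1 :=
    (Polynomial.natDegree_derivative_le _).trans (by omega)
  have hd3 : P2.natDegree ≤ 2 * (d - 1) := by
    refine (Polynomial.natDegree_sub_le _ _).trans (max_le ?_ (by simp))
    exact Polynomial.natDegree_pow_le_of_le 2 hd1
  have hcard : S.card ≤ 3 * d - 1 := by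
    have h1 := P1.roots.toFinset_card_le.trans P1.card_roots'
    have h2 := P2.roots.toFinset_card_le.trans P2.card_roots'
    have h3 := Finset.card_union_le P1.roots.toFinset P2.roots.toFinset
    have h4 : S.card ≤ P1.roots.toFinset.card + P2.roots.toFinset.card := h3
    omega
  have := interval_bound_aux φ hφ a b ε hε ha hb f S
    (fun c hc => Finset.mem_union_left _ (Multiset.mem_toFinset.2 hc))
    (fun c hc => Finset.mem_union_right _ (Multiset.mem_toFinset.2 hc))
    (3 * d - 1) (sInf J) (sSup J) hle ((Finset.card_filter_le _ _).trans hcard)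
  refine this.trans ?_
  gcongr
  rw [← Nat.cast_succ, ← ENNReal.ofReal_natCast, ← ENNReal.ofReal_mul (by positivity)]
  apply ENNReal.ofReal_le_ofReal
  rw [Nat.succ_eq_add_one, show 3 * d - 1 + 1 = 3 * d by omega]
  push_cast
  apply le_of_eq; ring

/-! ### Densities of `s`-concave measures -/

/-- The weighted `s`-mean of `u` and `v` with weights `α` and `1 - α`; for `s = 0` the weighted
geometric mean. -/
def smean (s α u v : ℝ) : ℝ :=
  if s = 0 then u ^ α * v ^ (1 - α) else (α * u ^ s + (1 - α) * v ^ s) ^ s⁻¹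

theorem smean_pos {s α u v : ℝ} (hα : 0 ≤ α) (hα1 : α ≤ 1) (hu : 0 < u)
    (hv : 0 < v) : 0 < smean s α u v := by
  unfold smean
  split_ifs with h
  · positivity
  · have h1 : 0 < u ^ s := by positivity
    have h2 : 0 < v ^ s := by positivity
    have : 0 < α * u ^ s + (1 - α) * v ^ s := by
      rcases eq_or_lt_of_le hα with rfl | h3
      · simpa using h2
      · have : 0 ≤ (1 - α) * v ^ s := mul_nonneg (by linarith) h2.le
        positivity
    positivity

theorem smean_mul {s α u v c : ℝ} (hα : 0 ≤ α) (hα1 : α ≤ 1) (hu : 0 < u)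
    (hv : 0 < v) (hc : 0 < c) : smean s α (u * c) (v * c) = smean s α u v * c := by
  unfold smean
  have h1α : 0 ≤ 1 - α := by linarith
  split_ifs with h
  · rw [Real.mul_rpow hu.le hc.le, Real.mul_rpow hv.le hc.le]
    have : c ^ α * c ^ (1 - α) = c := by rw [← Real.rpow_add hc]; simp
    calc u ^ α * c ^ α * (v ^ (1 - α) * c ^ (1 - α)) = u ^ α * v ^ (1 - α) * (c ^ α * c ^ (1 - α)) := by
          ring
      _ = _ := by rw [this]
  · rw [Real.mul_rpow hu.le hc.le, Real.mul_rpow hv.le hc.le,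
      show α * (u ^ s * c ^ s) + (1 - α) * (v ^ s * c ^ s) =
        (α * u ^ s + (1 - α) * v ^ s) * c ^ s by ring,
      Real.mul_rpow (by positivity) (by positivity), Real.rpow_rpow_inv hc.le h]

theorem geom_le_smean {s α u v : ℝ} (hs : 0 ≤ s) (hα : 0 ≤ α) (hα1 : α ≤ 1) (hu : 0 < u)
    (hv : 0 < v) : u ^ α * v ^ (1 - α) ≤ smean s α u v := by
  unfold smean
  have h1α : 0 ≤ 1 - α := by linarith
  split_ifs with h
  · exact le_rfl
  · have h1 := Real.geom_mean_le_arith_mean2_weighted hα h1α (Real.rpow_nonneg hu.le s)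
      (Real.rpow_nonneg hv.le s) (by ring)
    have h2 : u ^ α * v ^ (1 - α) = ((u ^ s) ^ α * (v ^ s) ^ (1 - α)) ^ s⁻¹ := by
      rw [← Real.rpow_mul hu.le, ← Real.rpow_mul hv.le, mul_comm s α, mul_comm s (1 - α),
        Real.rpow_mul hu.le, Real.rpow_mul hv.le,
        ← Real.mul_rpow (by positivity) (by positivity), Real.rpow_rpow_inv (by positivity) h]
    rw [h2]
    exact Real.rpow_le_rpow (by positivity) h1 (by positivity)

theorem ball_combo {n : ℕ} (x y : Fin n → ℝ) (r α : ℝ) (hα : 0 ≤ α) (hα1 : α ≤ 1) :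
    α • Metric.closedBall x r + (1 - α) • Metric.closedBall y r ⊆
      Metric.closedBall (α • x + (1 - α) • y) r := by
  rintro _ ⟨_, ⟨a, ha, rfl⟩, _, ⟨b, hb, rfl⟩, rfl⟩
  rw [Metric.mem_closedBall, dist_eq_norm] at *
  simp only
  calc ‖α • a + (1 - α) • b - (α • x + (1 - α) • y)‖ = ‖α • (a - x) + (1 - α) • (b - y)‖ := by
        congr 1; module
    _ ≤ ‖α • (a - x)‖ + ‖(1 - α) • (b - y)‖ := norm_add_le _ _
    _ ≤ α * r + (1 - α) * r := by
        rw [norm_smul, norm_smul, Real.norm_of_nonneg hα, Real.norm_of_nonneg (by linarith)]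
        gcongr
    _ = r := by ring

/-- The defining inequality of `s`-concavity for two balls of equal radius, normalised by a common
constant `V` (below, the volume of the balls). -/
theorem ball_ineq {n : ℕ} (s : ℝ) (hs : 0 ≤ s) (μ : Measure (Fin n → ℝ)) [IsProbabilityMeasure μ]
    (hμ : IsSConcave s μ) (x y : Fin n → ℝ) (r α u v : ℝ) (V : ℝ) (hV : 0 < V)
    (hα : 0 ≤ α) (hα1 : α ≤ 1) (hu : 0 < u) (hv : 0 < v)
    (hx : ENNReal.ofReal (u * V) ≤ μ (Metric.closedBall x r))
    (hy : ENNReal.ofReal (v * V) ≤ μ (Metric.closedBall y r)) :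
    ENNReal.ofReal (smean s α u v * V) ≤ μ (Metric.closedBall (α • x + (1 - α) • y) r) := by
  have h1α : 0 ≤ 1 - α := by linarith
  have h := hμ _ _ (isCompact_closedBall x r) (isCompact_closedBall y r)
    (lt_of_lt_of_le (by simpa using by positivity) hx)
    (lt_of_lt_of_le (by simpa using by positivity) hy) α hα hα1
  refine le_trans ?_ (h.trans (measure_mono (ball_combo x y r α hα hα1)))
  rw [← smean_mul hα hα1 hu hv hV]
  unfold smean
  split_ifs with h0
  · rw [ENNReal.ofReal_mul (by positivity), ← ENNReal.ofReal_rpow_of_pos (by positivity),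
      ← ENNReal.ofReal_rpow_of_pos (by positivity)]
    gcongr
  · apply ENNReal.ofReal_le_ofReal
    have hx' := (ENNReal.ofReal_le_iff_le_toReal (measure_ne_top _ _)).1 hx
    have hy' := (ENNReal.ofReal_le_iff_le_toReal (measure_ne_top _ _)).1 hy
    gcongr

/-- A density of `μ` satisfying a concavity inequality at every point. It is the lower limit of the
averages of `μ` over balls of radius `1 / (k + 1)`: it agrees almost everywhere with the
Radon-Nikodym derivative by Besicovitch differentiation, and it inherits the inequality from
`ball_ineq`. In general the `s`-concavity of `μ` gives a better exponent for the density, but the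
exponent `s` itself suffices here. -/
theorem exists_density {n : ℕ} (s : ℝ) (hs : 0 ≤ s) (μ : Measure (Fin n → ℝ))
    [IsProbabilityMeasure μ] (hac : μ ≪ volume) (hμ : IsSConcave s μ) :
    ∃ ρ : (Fin n → ℝ) → ENNReal, Measurable ρ ∧ μ = volume.withDensity ρ ∧
      ∀ x y α, 0 ≤ α → α ≤ 1 → ∀ u v : ℝ, 0 < u → 0 < v → ENNReal.ofReal u < ρ x →
        ENNReal.ofReal v < ρ y → ENNReal.ofReal (smean s α u v) ≤ ρ (α • x + (1 - α) • y) := by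
  set r : ℕ → ℝ := fun k => 1 / ((k : ℝ) + 1) with hr
  have hrpos : ∀ k, 0 < r k := fun k => by simp only [hr]; positivity
  set V : ℕ → ℝ := fun k => (2 * r k) ^ n with hV
  have hVpos : ∀ k, 0 < V k := fun k => by have := hrpos k; simp only [hV]; positivity
  have hvol : ∀ x k, volume (Metric.closedBall (x : Fin n → ℝ) (r k)) = ENNReal.ofReal (V k) := by
    intro x k
    rw [Real.volume_pi_closedBall _ (hrpos k).le, Fintype.card_fin]
  refine ⟨fun x => Filter.liminf
    (fun k => μ (Metric.closedBall x (r k)) / ENNReal.ofReal (V k)) Filter.atTop, ?_, ?_, ?_⟩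
  · refine Measurable.liminf fun k => Measurable.div_const ?_ _
    have hm : MeasurableSet {p : (Fin n → ℝ) × (Fin n → ℝ) | dist p.2 p.1 ≤ r k} :=
      (isClosed_le (continuous_snd.dist continuous_fst) continuous_const).measurableSet
    exact measurable_measure_prodMk_left hm
  · have h1 := Besicovitch.ae_tendsto_rnDeriv μ (volume : Measure (Fin n → ℝ))
    have h2 : (fun x => Filter.liminf
        (fun k => μ (Metric.closedBall x (r k)) / ENNReal.ofReal (V k)) Filter.atTop)
        =ᵐ[volume] μ.rnDeriv volume := by
      filter_upwards [h1] with x hx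
      have ht : Filter.Tendsto r Filter.atTop (nhdsWithin 0 (Set.Ioi 0)) :=
        tendsto_nhdsWithin_iff.2 ⟨tendsto_one_div_add_atTop_nhds_zero_nat,
          Filter.Eventually.of_forall hrpos⟩
      have h3 := hx.comp ht
      simp only [Function.comp_def, hvol] at h3
      exact h3.liminf_eq
    rw [withDensity_congr_ae h2, Measure.withDensity_rnDeriv_eq _ _ hac]
  · intro x y α hα hα1 u v hu hv hx hy
    have hx' := Filter.eventually_lt_of_lt_liminf hx
    have hy' := Filter.eventually_lt_of_lt_liminf hy
    refine Filter.le_liminf_of_le (by isBoundedDefault) ?_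
    filter_upwards [hx', hy'] with k hxk hyk
    have hVk0 : ENNReal.ofReal (V k) ≠ 0 := by simpa using hVpos k
    rw [ENNReal.le_div_iff_mul_le (Or.inl hVk0) (Or.inl ENNReal.ofReal_ne_top),
      ← ENNReal.ofReal_mul (smean_pos hα hα1 hu hv).le]
    have hxk' := hxk.le
    have hyk' := hyk.le
    rw [ENNReal.le_div_iff_mul_le (Or.inl hVk0) (Or.inl ENNReal.ofReal_ne_top),
      ← ENNReal.ofReal_mul hu.le] at hxk'
    rw [ENNReal.le_div_iff_mul_le (Or.inl hVk0) (Or.inl ENNReal.ofReal_ne_top),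
      ← ENNReal.ofReal_mul hv.le] at hyk'
    exact ball_ineq s hs μ hμ x y (r k) α u v (V k) (hVpos k) hα hα1 hu hv hxk' hyk'

theorem volume_preimage_affine {n : ℕ} (c : ℝ) (hc : c ≠ 0) (w : Fin n → ℝ)
    (S : Set (Fin n → ℝ)) :
    volume ((fun x => c • x + w) ⁻¹' S) = ENNReal.ofReal |(c ^ n)⁻¹| * volume S := by
  have : (fun x : Fin n → ℝ => c • x + w) ⁻¹' S = (c • ·) ⁻¹' ((fun y => y + w) ⁻¹' S) := rfl
  rw [this, Measure.addHaar_preimage_smul _ hc, measure_preimage_add_right]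
  simp

theorem lintegral_affine {n : ℕ} (c : ℝ) (hc : c ≠ 0) (w : Fin n → ℝ)
    (g : (Fin n → ℝ) → ENNReal) (hg : Measurable g) :
    ∫⁻ x, g (c • x + w) = ENNReal.ofReal |(c ^ n)⁻¹| * ∫⁻ x, g x := by
  have hm : Measurable (fun x : Fin n → ℝ => c • x + w) := by fun_prop
  have h : Measure.map (fun x : Fin n → ℝ => c • x + w) volume =
      ENNReal.ofReal |(c ^ n)⁻¹| • volume := by
    ext S hS
    rw [Measure.map_apply hm hS, volume_preimage_affine c hc]; rfl
  rw [← lintegral_map hg hm, h, lintegral_smul_measure, smul_eq_mul]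

/-- An everywhere defined, bounded density of `μ` obeying `s`-concavity pointwise on `{r > 0}`,
together with its supremum `T` and a point `z` where at least half of `T` is attained. -/
theorem exists_real_density {n : ℕ} (s : ℝ) (hs : 0 ≤ s) (μ : Measure (Fin n → ℝ))
    [IsProbabilityMeasure μ] (hac : μ ≪ volume) (hμ : IsSConcave s μ) :
    ∃ (r : (Fin n → ℝ) → ℝ) (T : ℝ) (z : Fin n → ℝ), Measurable r ∧ (∀ x, 0 ≤ r x) ∧
      μ = volume.withDensity (fun x => ENNReal.ofReal (r x)) ∧ 0 < T ∧ (∀ x, r x ≤ T) ∧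
      T / 2 < r z ∧
      ∀ x y α, 0 ≤ α → α ≤ 1 → 0 < r x → 0 < r y →
        smean s α (r x) (r y) ≤ r (α • x + (1 - α) • y) := by
  obtain ⟨ρ, hm, hρ, hconc⟩ := exists_density s hs μ hac hμ
  have hint : ∫⁻ x, ρ x = 1 := by
    have h1 : μ Set.univ = 1 := measure_univ
    rwa [hρ, withDensity_apply _ MeasurableSet.univ, Measure.restrict_univ] at h1
  -- a level set of positive volume
  obtain ⟨t, ht, htv⟩ : ∃ t : ℝ, 0 < t ∧ 0 < volume {x | ENNReal.ofReal t < ρ x} := by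
    by_contra hcon
    push Not at hcon
    have h0 : ρ =ᵐ[volume] 0 := by
      have hall : ∀ᵐ x, ∀ k : ℕ, ρ x ≤ ENNReal.ofReal (1 / ((k : ℝ) + 1)) := by
        rw [ae_all_iff]
        intro k
        have := le_zero_iff.1 (hcon (1 / ((k : ℝ) + 1)) (by positivity))
        rw [ae_iff]; simpa using this
      filter_upwards [hall] with x hx
      have hlim : Filter.Tendsto (fun k : ℕ => ENNReal.ofReal (1 / ((k : ℝ) + 1)))
          Filter.atTop (nhds 0) := by
        have := ENNReal.tendsto_ofReal (tendsto_one_div_add_atTop_nhds_zero_nat (𝕜 := ℝ))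
        simpa using this
      exact le_zero_iff.1 (ge_of_tendsto' hlim hx)
    rw [lintegral_congr_ae h0] at hint
    simp at hint
  -- averaging a level set of volume at least `κ > 0` with a point `y` yields a set of volume at
  -- least `κ / 2 ^ n` on which `ρ` is large if `ρ y` is large, so `ρ y` is bounded
  obtain ⟨κ, hκ, hκv⟩ : ∃ κ : ℝ, 0 < κ ∧ ENNReal.ofReal κ ≤ volume {x | ENNReal.ofReal t < ρ x} := by
    obtain ⟨c, hc1, hc2⟩ := ENNReal.lt_iff_exists_nnreal_btwn.1 htv
    exact ⟨c, by exact_mod_cast hc1, by rw [ENNReal.ofReal_coe_nnreal]; exact hc2.le⟩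
  have hbd : ∀ y, ∀ v : ℝ, 0 < v → ENNReal.ofReal v < ρ y → v ≤ (2 ^ n / κ) ^ 2 / t := by
    intro y v hv hvy
    set c := t ^ (1 / 2 : ℝ) * v ^ (1 - 1 / 2 : ℝ) with hc
    have hcpos : 0 < c := by positivity
    have hsub : {x | ENNReal.ofReal t < ρ x} ⊆
        (fun x => (1 / 2 : ℝ) • x + (1 - 1 / 2 : ℝ) • y) ⁻¹' {x | ENNReal.ofReal c ≤ ρ x} := by
      intro x hx
      refine le_trans (ENNReal.ofReal_le_ofReal ?_)
        (hconc x y (1 / 2) (by norm_num) (by norm_num) t v ht hv hx hvy)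
      exact geom_le_smean hs (by norm_num) (by norm_num) ht hv
    have h1 := hκv.trans (measure_mono hsub)
    rw [volume_preimage_affine _ (by norm_num)] at h1
    have h2 := mul_meas_ge_le_lintegral (μ := volume) hm (ENNReal.ofReal c)
    rw [hint] at h2
    have h3 : ENNReal.ofReal (c * κ) ≤ ENNReal.ofReal (2 ^ n) := by
      rw [ENNReal.ofReal_mul hcpos.le]
      calc ENNReal.ofReal c * ENNReal.ofReal κ
          ≤ ENNReal.ofReal c * (ENNReal.ofReal |((1 / 2 : ℝ) ^ n)⁻¹| *
            volume {x | ENNReal.ofReal c ≤ ρ x}) := by gcongr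
        _ = ENNReal.ofReal |((1 / 2 : ℝ) ^ n)⁻¹| * (ENNReal.ofReal c *
            volume {x | ENNReal.ofReal c ≤ ρ x}) := by ring
        _ ≤ ENNReal.ofReal |((1 / 2 : ℝ) ^ n)⁻¹| * 1 := by gcongr
        _ = ENNReal.ofReal (2 ^ n) := by
            rw [mul_one, abs_of_pos (by positivity)]; congr 1; simp
    rw [ENNReal.ofReal_le_ofReal_iff (by positivity)] at h3
    have h4 : c ^ 2 = t * v := by
      rw [hc, mul_pow, ← Real.rpow_natCast, ← Real.rpow_natCast, ← Real.rpow_mul ht.le,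
        ← Real.rpow_mul hv.le]
      norm_num
    rw [le_div_iff₀ ht, mul_comm, ← h4]
    have : c ≤ 2 ^ n / κ := by rwa [le_div_iff₀ hκ]
    gcongr
  set B := (2 ^ n / κ) ^ 2 / t with hB
  have hBpos : 0 < B := by positivity
  have hρB : ∀ y, ρ y ≤ ENNReal.ofReal B := by
    intro y
    by_contra hcon
    push Not at hcon
    obtain ⟨c, hc1, hc2⟩ := ENNReal.lt_iff_exists_nnreal_btwn.1 hcon
    rw [ENNReal.ofReal_lt_coe_iff hBpos.le] at hc1
    have := hbd y c (hBpos.trans hc1) (by rwa [ENNReal.ofReal_coe_nnreal])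
    linarith
  have hfin : ∀ y, ρ y ≠ ⊤ := fun y => ((hρB y).trans_lt ENNReal.ofReal_lt_top).ne
  have hr_eq : ∀ y, ENNReal.ofReal (ρ y).toReal = ρ y := fun y => ENNReal.ofReal_toReal (hfin y)
  have hbdd : BddAbove (Set.range fun x => (ρ x).toReal) := by
    refine ⟨B, ?_⟩
    rintro _ ⟨x, rfl⟩
    exact ENNReal.toReal_le_of_le_ofReal hBpos.le (hρB x)
  obtain ⟨x0, hx0⟩ : ∃ x0, ENNReal.ofReal t < ρ x0 := by
    by_contra hcon
    push Not at hcon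
    have : {x | ENNReal.ofReal t < ρ x} = ∅ := by
      ext x; simpa using hcon x
    rw [this] at htv; simp at htv
  set T := ⨆ x, (ρ x).toReal with hT
  have hTpos : 0 < T := by
    refine lt_of_lt_of_le ?_ (le_ciSup hbdd x0)
    refine ENNReal.toReal_pos (fun h => ?_) (hfin x0)
    rw [h] at hx0; simp at hx0
  obtain ⟨z, hz⟩ := exists_lt_of_lt_ciSup (show T / 2 < ⨆ x, (ρ x).toReal by rw [← hT]; linarith)
  refine ⟨fun x => (ρ x).toReal, T, z, hm.ennreal_toReal, fun x => ENNReal.toReal_nonneg, ?_,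
    hTpos, fun x => le_ciSup hbdd x, hz, ?_⟩
  · simp_rw [hr_eq]; exact hρ
  · intro x y α hα hα1 hx hy
    simp only at hx hy ⊢
    have hlim : ∀ θ : ℝ, 0 < θ → θ < 1 →
        smean s α (ρ x).toReal (ρ y).toReal * θ ≤ (ρ (α • x + (1 - α) • y)).toReal := by
      intro θ hθ hθ1
      rw [← smean_mul hα hα1 hx hy hθ]
      rw [← ENNReal.ofReal_le_iff_le_toReal (hfin _)]
      refine hconc x y α hα hα1 _ _ (by positivity) (by positivity) ?_ ?_
      · rw [ENNReal.ofReal_lt_iff_lt_toReal (by positivity) (hfin _)]; nlinarith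
      · rw [ENNReal.ofReal_lt_iff_lt_toReal (by positivity) (hfin _)]; nlinarith
    have hm0 := smean_pos (s := s) hα hα1 hx hy
    by_contra hcon
    push Not at hcon
    set R := (ρ (α • x + (1 - α) • y)).toReal with hR
    set m := smean s α (ρ x).toReal (ρ y).toReal with hmm
    have hR0 : 0 ≤ R := ENNReal.toReal_nonneg
    have := hlim ((R / m + 1) / 2) (by positivity) (by
      have : R / m < 1 := (div_lt_one hm0).2 hcon
      linarith)
    have h5 : m * ((R / m + 1) / 2) = (R + m) / 2 := by field_simp
    linarith

/-! ### Layers, slices and homotheties -/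

theorem layer_cake {n : ℕ} (r : (Fin n → ℝ) → ℝ) (T : ℝ) (hr : Measurable r)
    (hrT : ∀ x, r x ≤ T) (F : (Fin n → ℝ) → ENNReal) (hF : Measurable F) :
    ∫⁻ x, F x * ENNReal.ofReal (r x) = ∫⁻ t in Set.Ioo 0 T, ∫⁻ x in {x | t < r x}, F x := by
  have h1 : ∀ x, ENNReal.ofReal (r x) =
      ∫⁻ t in Set.Ioo 0 T, (Set.Iio (r x)).indicator 1 t := by
    intro x
    rw [lintegral_indicator_one measurableSet_Iio, Measure.restrict_apply measurableSet_Iio]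
    have : Set.Iio (r x) ∩ Set.Ioo 0 T = Set.Ioo 0 (r x) := by
      ext t
      simp only [Set.mem_inter_iff, Set.mem_Iio, Set.mem_Ioo]
      constructor
      · rintro ⟨h1, h2, _⟩; exact ⟨h2, h1⟩
      · rintro ⟨h1, h2⟩; exact ⟨h2, h1, h2.trans_le (hrT x)⟩
    rw [this, Real.volume_Ioo, sub_zero]
  have hS : MeasurableSet {p : (Fin n → ℝ) × ℝ | p.2 < r p.1} :=
    measurableSet_lt measurable_snd (hr.comp measurable_fst)
  have h2 : ∀ x, F x * ENNReal.ofReal (r x) =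
      ∫⁻ t in Set.Ioo 0 T, {p : (Fin n → ℝ) × ℝ | p.2 < r p.1}.indicator (fun p => F p.1) (x, t) := by
    intro x
    rw [h1, ← lintegral_const_mul _ (measurable_one.indicator measurableSet_Iio)]
    refine lintegral_congr fun t => ?_
    by_cases ht : t < r x
    · rw [Set.indicator_of_mem (show t ∈ Set.Iio (r x) from ht),
        Set.indicator_of_mem (show (x, t) ∈ {p : (Fin n → ℝ) × ℝ | p.2 < r p.1} from ht)]
      simp
    · rw [Set.indicator_of_notMem (show t ∉ Set.Iio (r x) from ht),
        Set.indicator_of_notMem (show (x, t) ∉ {p : (Fin n → ℝ) × ℝ | p.2 < r p.1} from ht)]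
      simp
  simp_rw [h2]
  rw [lintegral_lintegral_swap]
  · refine lintegral_congr fun t => ?_
    rw [← lintegral_indicator (measurableSet_lt measurable_const hr)]
    rfl
  · exact ((hF.comp measurable_fst).indicator hS).aemeasurable

/-- An inequality on all level sets `{r > t}`, `0 < t < T`, integrates to one for `r dx`. The
error term is allowed on the larger set `{r > min t (T / 4)}`, because the reference points used
later are only known to lie in `{r > T / 4}`. The constant is `5 = 1 + 4`: the level sets
contribute `∫ r = 1`, and `T * |{r > T / 4}| ≤ 4` by Markov's inequality. -/
theorem layer_le {n : ℕ} (r : (Fin n → ℝ) → ℝ) (T : ℝ) (hr : Measurable r)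
    (hrT : ∀ x, r x ≤ T) (hint : ∫⁻ x, ENNReal.ofReal (r x) = 1)
    (F H : (Fin n → ℝ) → ENNReal) (hF : Measurable F) (hH : Measurable H) (c : ENNReal)
    (h : ∀ t, 0 < t → t < T → ∫⁻ x in {x | t < r x}, F x ≤
      c * volume {x | min t (T / 4) < r x} + ∫⁻ x in {x | t < r x}, H x) :
    ∫⁻ x, F x * ENNReal.ofReal (r x) ≤ 5 * c + ∫⁻ x, H x * ENNReal.ofReal (r x) := by
  rw [layer_cake r T hr hrT F hF, layer_cake r T hr hrT H hH]
  have hanti : Antitone fun t : ℝ => volume {x | min t (T / 4) < r x} := fun t t' htt' =>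
    measure_mono fun x (hx : min t' (T / 4) < r x) =>
      lt_of_le_of_lt (min_le_min_right _ htt') hx
  have h1 : ∫⁻ t in Set.Ioo 0 T, volume {x | t < r x} = 1 := by
    have := layer_cake r T hr hrT 1 measurable_one
    simp only [Pi.one_apply, one_mul, lintegral_const, Measure.restrict_apply_univ] at this
    rw [← this, hint]
  have h2 : ENNReal.ofReal T * volume {x | T / 4 < r x} ≤ 4 := by
    have h3 := mul_meas_ge_le_lintegral (μ := volume) hr.ennreal_ofReal (ENNReal.ofReal (T / 4))
    rw [hint] at h3
    have h4 : volume {x | T / 4 < r x} ≤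
        volume {x | ENNReal.ofReal (T / 4) ≤ ENNReal.ofReal (r x)} :=
      measure_mono fun x (hx : T / 4 < r x) => ENNReal.ofReal_le_ofReal hx.le
    calc ENNReal.ofReal T * volume {x | T / 4 < r x}
        = 4 * (ENNReal.ofReal (T / 4) * volume {x | T / 4 < r x}) := by
          rw [← mul_assoc, ← ENNReal.ofReal_ofNat, ← ENNReal.ofReal_mul (by norm_num)]
          congr 2; ring
      _ ≤ 4 * 1 := by gcongr; exact (mul_le_mul_right h4 _).trans h3
      _ = 4 := mul_one _
  have h5 : ∫⁻ t in Set.Ioo 0 T, volume {x | min t (T / 4) < r x} ≤ 5 := by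
    calc ∫⁻ t in Set.Ioo 0 T, volume {x | min t (T / 4) < r x}
        ≤ ∫⁻ t in Set.Ioo 0 T, (volume {x | t < r x} + volume {x | T / 4 < r x}) := by
          refine lintegral_mono fun t => ?_
          rcases min_choice t (T / 4) with hm | hm
          · rw [hm]; exact le_self_add
          · rw [hm]; exact le_add_self
      _ = 1 + volume {x | T / 4 < r x} * ENNReal.ofReal T := by
          rw [lintegral_add_right _ measurable_const, h1, setLIntegral_const, Real.volume_Ioo,
            sub_zero]
      _ ≤ 1 + 4 := by gcongr; rw [mul_comm]; exact h2
      _ = 5 := by norm_num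
  calc ∫⁻ t in Set.Ioo 0 T, ∫⁻ x in {x | t < r x}, F x
      ≤ ∫⁻ t in Set.Ioo 0 T, (c * volume {x | min t (T / 4) < r x} +
          ∫⁻ x in {x | t < r x}, H x) :=
        setLIntegral_mono' measurableSet_Ioo fun t ht => h t ht.1 ht.2
    _ = c * (∫⁻ t in Set.Ioo 0 T, volume {x | min t (T / 4) < r x}) +
          ∫⁻ t in Set.Ioo 0 T, ∫⁻ x in {x | t < r x}, H x := by
        rw [lintegral_add_left (hanti.measurable.const_mul c), lintegral_const_mul _ hanti.measurable]
    _ ≤ c * 5 + _ := by gcongr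
    _ = _ := by rw [mul_comm]

/-- Integration along segments in direction `e`: a one-dimensional estimate, uniform over segments
`x + J e` with `J ⊆ [0, 1]`, yields an estimate over a convex set `K`. The error `A` is incurred
only by those `x` whose segment `x + [0, 1] e` meets `K`. -/
theorem slice_le {n : ℕ} (K : Set (Fin n → ℝ)) (hK : MeasurableSet K) (hKc : Convex ℝ K)
    (e : Fin n → ℝ) (F H : (Fin n → ℝ) → ENNReal) (hF : Measurable F) (hH : Measurable H)
    (A : ENNReal)
    (h : ∀ x, ∀ J : Set ℝ, J.OrdConnected → J ⊆ Set.Icc 0 1 →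
      ∫⁻ t in J, F (x + t • e) ≤ A + ∫⁻ t in J, H (x + t • e)) :
    ∫⁻ x in K, F x ≤ A * volume {x | ∃ t ∈ Set.Icc (0 : ℝ) 1, x + t • e ∈ K} + ∫⁻ x in K, H x := by
  have hm : Measurable fun p : (Fin n → ℝ) × ℝ => p.1 + p.2 • e := by fun_prop
  have hJm : ∀ x, MeasurableSet {t : ℝ | x + t • e ∈ K} := fun x =>
    (by fun_prop : Measurable fun t : ℝ => x + t • e) hK
  -- averaging over translations by `t • e`, `t ∈ [0, 1]`
  have key : ∀ G : (Fin n → ℝ) → ENNReal, Measurable G → ∫⁻ x in K, G x =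
      ∫⁻ x, ∫⁻ t in {t : ℝ | x + t • e ∈ K} ∩ Set.Icc 0 1, G (x + t • e) := by
    intro G hG
    have h1 : ∀ x, ∫⁻ t in {t : ℝ | x + t • e ∈ K} ∩ Set.Icc 0 1, G (x + t • e) =
        ∫⁻ t in Set.Icc (0 : ℝ) 1, K.indicator G (x + t • e) := by
      intro x
      rw [← Measure.restrict_restrict (hJm x), ← lintegral_indicator (hJm x)]
      rfl
    simp_rw [h1]
    rw [lintegral_lintegral_swap]
    · have h2 : ∀ t : ℝ, ∫⁻ x, K.indicator G (x + t • e) = ∫⁻ x in K, G x := by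
        intro t
        rw [lintegral_add_right_eq_self (fun x => K.indicator G x), lintegral_indicator hK]
      simp_rw [h2]
      simp
    · exact ((hG.indicator hK).comp hm).aemeasurable
  rw [key F hF, key H hH]
  have hmeas : Measurable fun x : Fin n → ℝ =>
      ∫⁻ t in {t : ℝ | x + t • e ∈ K} ∩ Set.Icc 0 1, H (x + t • e) := by
    have h1 : ∀ x, ∫⁻ t in {t : ℝ | x + t • e ∈ K} ∩ Set.Icc 0 1, H (x + t • e) =
        ∫⁻ t in Set.Icc (0 : ℝ) 1, K.indicator H (x + t • e) := by
      intro x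
      rw [← Measure.restrict_restrict (hJm x), ← lintegral_indicator (hJm x)]
      rfl
    simp_rw [h1]
    exact ((hH.indicator hK).comp hm).lintegral_prod_right'
  set K' := {x | ∃ t ∈ Set.Icc (0 : ℝ) 1, x + t • e ∈ K} with hK'
  calc ∫⁻ x, ∫⁻ t in {t : ℝ | x + t • e ∈ K} ∩ Set.Icc 0 1, F (x + t • e)
      ≤ ∫⁻ x, (K'.indicator (fun _ => A) x +
          ∫⁻ t in {t : ℝ | x + t • e ∈ K} ∩ Set.Icc 0 1, H (x + t • e)) := by
        refine lintegral_mono fun x => ?_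
        by_cases hx : x ∈ K'
        · rw [Set.indicator_of_mem hx]
          refine h x _ ?_ Set.inter_subset_right
          refine Set.OrdConnected.inter ?_ Set.ordConnected_Icc
          refine Convex.ordConnected ?_
          intro t ht t' ht' a b ha hb hab
          have := hKc ht ht' ha hb hab
          show x + (a • t + b • t') • e ∈ K
          convert this using 1
          calc x + (a • t + b • t') • e = (a + b) • x + (a • t + b • t') • e := by rw [hab, one_smul]
            _ = _ := by simp only [smul_eq_mul]; module
        · have hempty : {t : ℝ | x + t • e ∈ K} ∩ Set.Icc 0 1 = ∅ := by
            rw [Set.eq_empty_iff_forall_notMem]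
            rintro t ⟨h1, h2⟩
            exact hx ⟨t, h2, h1⟩
          simp [hempty]
    _ = (∫⁻ x, K'.indicator (fun _ => A) x) + _ := lintegral_add_right _ hmeas
    _ ≤ A * volume K' + _ := by gcongr; exact lintegral_indicator_const_le _ _

/-- The set swept out in `slice_le` has volume at most `2 ^ n * |L|`: the midpoint of `x` and `y` is
also the midpoint of `x + t (y - z) ∈ K` and of a point of the segment `[z, y]`, hence lies in
`L`. -/
theorem volume_sweep_le {n : ℕ} (K L : Set (Fin n → ℝ)) (hKL : K ⊆ L) (hL : Convex ℝ L)
    (z y : Fin n → ℝ) (hz : z ∈ L) (hy : y ∈ L) :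
    volume {x | ∃ t ∈ Set.Icc (0 : ℝ) 1, x + t • (y - z) ∈ K} ≤ 2 ^ n * volume L := by
  have hsub : {x | ∃ t ∈ Set.Icc (0 : ℝ) 1, x + t • (y - z) ∈ K} ⊆
      (fun x => (1 / 2 : ℝ) • x + (1 / 2 : ℝ) • y) ⁻¹' L := by
    rintro x ⟨t, ht, hx⟩
    have h1 : (1 - t) • y + t • z ∈ L := hL hy hz (by linarith [ht.2]) ht.1 (by ring)
    have h2 := hL (hKL hx) h1 (a := 1 / 2) (b := 1 / 2) (by norm_num) (by norm_num) (by norm_num)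
    show (1 / 2 : ℝ) • x + (1 / 2 : ℝ) • y ∈ L
    convert h2 using 1
    module
  refine (measure_mono hsub).trans ?_
  rw [volume_preimage_affine _ (by norm_num)]
  gcongr
  rw [abs_of_pos (by positivity)]
  simp [ENNReal.ofReal_pow]

/-- If `S` has measure at most `κ` on every ray segment issuing from `p ∈ L`, then `S` occupies only a
small part of `L`. Averaging over the homotheties with centre `p` and ratio `t ∈ [1/2, 1]` replaces
polar coordinates. -/
theorem volume_sublevel_le {n : ℕ} (L S : Set (Fin n → ℝ)) (hLm : MeasurableSet L)
    (hSm : MeasurableSet S) (hL : Convex ℝ L) (p : Fin n → ℝ) (hp : p ∈ L) (κ : ENNReal)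
    (hS : ∀ v : Fin n → ℝ, volume {t : ℝ | t ∈ Set.Icc (0 : ℝ) 1 ∧ p + t • v ∈ S} ≤ κ) :
    volume (S ∩ L) ≤ 2 * κ * 2 ^ n * volume L := by
  set D := (fun x : Fin n → ℝ => (1 / 2 : ℝ) • x + (1 / 2 : ℝ) • p) ⁻¹' L with hD
  have hDm : MeasurableSet D :=
    (by fun_prop : Measurable fun x : Fin n → ℝ => (1 / 2 : ℝ) • x + (1 / 2 : ℝ) • p) hLm
  have hDv : volume D ≤ 2 ^ n * volume L := by
    rw [hD, volume_preimage_affine _ (by norm_num)]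
    gcongr
    rw [abs_of_pos (by positivity)]
    simp [ENNReal.ofReal_pow]
  have hm : Measurable fun q : ℝ × (Fin n → ℝ) => p + q.1 • (q.2 - p) := by fun_prop
  have h1 : ∀ t ∈ Set.Icc (1 / 2 : ℝ) 1, volume (S ∩ L) ≤
      ∫⁻ x in D, S.indicator 1 (p + t • (x - p)) := by
    intro t ht
    have htpos : 0 < t := by linarith [ht.1]
    have hmt : Measurable fun x : Fin n → ℝ => p + t • (x - p) := by fun_prop
    have h2 : (fun x : Fin n → ℝ => p + t • (x - p)) = fun x => t • x + (p - t • p) := by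
      ext1 x; module
    have h3 : volume (S ∩ L) ≤ volume ((fun x : Fin n → ℝ => p + t • (x - p)) ⁻¹' (S ∩ L)) := by
      rw [h2, volume_preimage_affine t htpos.ne']
      refine le_mul_of_one_le_left' ?_
      rw [ENNReal.one_le_ofReal, abs_of_pos (by positivity)]
      exact (one_le_inv₀ (by positivity)).2 (pow_le_one₀ htpos.le ht.2)
    have h4 : (fun x : Fin n → ℝ => p + t • (x - p)) ⁻¹' (S ∩ L) ⊆
        (fun x : Fin n → ℝ => p + t • (x - p)) ⁻¹' S ∩ D := by
      rintro x ⟨hxS, hxL⟩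
      refine ⟨hxS, ?_⟩
      have ht2 : 1 / (2 * t) ≤ 1 := by rw [div_le_one (by positivity)]; linarith [ht.1]
      have h5 := hL hxL hp (a := 1 / (2 * t)) (b := 1 - 1 / (2 * t)) (by positivity)
        (by linarith) (by ring)
      show (1 / 2 : ℝ) • x + (1 / 2 : ℝ) • p ∈ L
      convert h5 using 1
      have h6 : (1 / (2 * t)) • (p + t • (x - p)) =
          (1 / (2 * t)) • p + ((1 / (2 * t)) * t) • (x - p) := by module
      have h7 : (1 / (2 * t)) * t = 1 / 2 := by field_simp
      rw [h6, h7]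
      module
    refine (h3.trans (measure_mono h4)).trans (le_of_eq ?_)
    have h8 : ∀ x, S.indicator (1 : (Fin n → ℝ) → ENNReal) (p + t • (x - p)) =
      ((fun x : Fin n → ℝ => p + t • (x - p)) ⁻¹' S).indicator 1 x := fun x => rfl
    simp_rw [h8]
    rw [lintegral_indicator_one (hmt hSm), Measure.restrict_apply (hmt hSm)]
  have h9 : 2⁻¹ * volume (S ∩ L) ≤ κ * volume D := by
    calc 2⁻¹ * volume (S ∩ L) = ∫⁻ t in Set.Icc (1 / 2 : ℝ) 1, volume (S ∩ L) := by
          rw [setLIntegral_const, Real.volume_Icc, mul_comm]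
          congr 1
          rw [show (1 : ℝ) - 1 / 2 = 2⁻¹ by norm_num, ENNReal.ofReal_inv_of_pos (by norm_num)]
          simp
      _ ≤ ∫⁻ t in Set.Icc (1 / 2 : ℝ) 1, ∫⁻ x in D, S.indicator 1 (p + t • (x - p)) :=
          setLIntegral_mono' measurableSet_Icc h1
      _ = ∫⁻ x in D, ∫⁻ t in Set.Icc (1 / 2 : ℝ) 1, S.indicator 1 (p + t • (x - p)) := by
          rw [lintegral_lintegral_swap]
          exact ((measurable_one.indicator hSm).comp hm).aemeasurable
      _ ≤ ∫⁻ x in D, κ := by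
          refine lintegral_mono fun x => ?_
          have hmx : Measurable fun t : ℝ => p + t • (x - p) := by fun_prop
          have h10 : ∀ t : ℝ, S.indicator (1 : (Fin n → ℝ) → ENNReal) (p + t • (x - p)) =
            ((fun t : ℝ => p + t • (x - p)) ⁻¹' S).indicator 1 t := fun t => rfl
          simp_rw [h10]
          rw [lintegral_indicator_one (hmx hSm), Measure.restrict_apply (hmx hSm)]
          refine (measure_mono ?_).trans (hS (x - p))
          rintro t ⟨h11, h12⟩
          exact ⟨⟨by linarith [h12.1], h12.2⟩, h11⟩
      _ = κ * volume D := by rw [setLIntegral_const]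
  calc volume (S ∩ L) = 2 * (2⁻¹ * volume (S ∩ L)) := by
        rw [← mul_assoc, ENNReal.mul_inv_cancel (by norm_num) (by norm_num), one_mul]
    _ ≤ 2 * (κ * volume D) := mul_le_mul_right h9 _
    _ ≤ 2 * (κ * (2 ^ n * volume L)) := by gcongr
    _ = _ := by ring

/-- The restriction `t ↦ f (x + t v)` of `f` to a line, as a one-variable polynomial. -/
def linePoly {n : ℕ} (f : MvPolynomial (Fin n) ℝ) (x v : Fin n → ℝ) : Polynomial ℝ :=
  MvPolynomial.aeval (fun i => Polynomial.C (x i) + Polynomial.C (v i) * Polynomial.X) f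

theorem linePoly_eval {n : ℕ} (f : MvPolynomial (Fin n) ℝ) (x v : Fin n → ℝ) (t : ℝ) :
    (linePoly f x v).eval t = MvPolynomial.eval (x + t • v) f := by
  have h : ((Polynomial.evalRingHom t).comp
      (MvPolynomial.aeval (R := ℝ)
        (fun i => Polynomial.C (x i) + Polynomial.C (v i) * Polynomial.X)).toRingHom) =
      MvPolynomial.eval (x + t • v) := by
    refine MvPolynomial.ringHom_ext (fun a => ?_) (fun i => ?_)
    · show ((MvPolynomial.aeval (R := ℝ) _ (MvPolynomial.C a)) : Polynomial ℝ).eval t = _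
      rw [MvPolynomial.aeval_C, MvPolynomial.eval_C]
      exact Polynomial.eval_C
    · show ((MvPolynomial.aeval (R := ℝ) _ (MvPolynomial.X i)) : Polynomial ℝ).eval t = _
      rw [MvPolynomial.aeval_X, MvPolynomial.eval_X, Polynomial.eval_add, Polynomial.eval_C,
        Polynomial.eval_mul, Polynomial.eval_C, Polynomial.eval_X, Pi.add_apply, Pi.smul_apply,
        smul_eq_mul, mul_comm]
  exact congrArg (fun g => g f) h

theorem linePoly_natDegree {n : ℕ} (f : MvPolynomial (Fin n) ℝ) (x v : Fin n → ℝ) (d : ℕ)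
    (hf : f.totalDegree ≤ d) : (linePoly f x v).natDegree ≤ d := by
  have := MvPolynomial.aeval_natDegree_le (n := 1) f hf
    (fun i => Polynomial.C (x i) + Polynomial.C (v i) * Polynomial.X) (fun i => by
      compute_degree)
  rwa [mul_one] at this

/-- The directional derivative `∂_v f = ∑ i, v i * ∂f / ∂x i` as a polynomial. -/
def dirDeriv {n : ℕ} (f : MvPolynomial (Fin n) ℝ) (v : Fin n → ℝ) : MvPolynomial (Fin n) ℝ :=
  ∑ i, MvPolynomial.C (v i) * MvPolynomial.pderiv i f

theorem linePoly_derivative {n : ℕ} (f : MvPolynomial (Fin n) ℝ) (x v : Fin n → ℝ) :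
    (linePoly f x v).derivative = linePoly (dirDeriv f v) x v := by
  induction f using MvPolynomial.induction_on with
  | C a => simp [linePoly, dirDeriv]
  | add p q hp hq =>
    simp only [linePoly, dirDeriv, map_add, mul_add, Finset.sum_add_distrib] at *
    rw [hp, hq]
  | mul_X p i hp =>
    have h1 : dirDeriv (p * MvPolynomial.X i) v =
        dirDeriv p v * MvPolynomial.X i + p * MvPolynomial.C (v i) := by
      simp only [dirDeriv, Derivation.leibniz, MvPolynomial.pderiv_X, smul_eq_mul, mul_add,
        Finset.sum_add_distrib, Finset.sum_mul]
      rw [add_comm]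
      congr 1
      · exact Finset.sum_congr rfl fun j _ => by ring
      · rw [Finset.sum_eq_single i]
        · simp [mul_comm]
        · intro j _ hj; simp [hj.symm]
        · simp
    rw [h1]
    simp only [linePoly, map_mul, map_add, MvPolynomial.aeval_X, Polynomial.derivative_mul] at *
    rw [hp]
    simp [Polynomial.algebraMap_eq]

theorem dirDeriv_totalDegree {n : ℕ} (f : MvPolynomial (Fin n) ℝ) (v : Fin n → ℝ) (d : ℕ)
    (hf : f.totalDegree ≤ d) : (dirDeriv f v).totalDegree ≤ d - 1 := by
  refine MvPolynomial.totalDegree_finsetSum_le fun i _ => ?_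
  refine (MvPolynomial.totalDegree_mul _ _).trans ?_
  rw [MvPolynomial.totalDegree_C, zero_add]
  rw [MvPolynomial.as_sum f, map_sum]
  refine MvPolynomial.totalDegree_finsetSum_le fun m hm => ?_
  rw [MvPolynomial.pderiv_monomial]
  by_cases h0 : m i = 0
  · simp [h0]
  · refine (MvPolynomial.totalDegree_monomial_le _ _).trans ?_
    have h1 : (m.sum fun _ e => e) ≤ d := (MvPolynomial.le_totalDegree hm).trans hf
    have h2 : m = (m - Finsupp.single i 1) + Finsupp.single i 1 := by
      rw [tsub_add_cancel_of_le]
      rw [Finsupp.single_le_iff]; omega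
    have h3 : (m.sum fun _ e => e) = ((m - Finsupp.single i 1).sum fun _ e => e) + 1 := by
      conv_lhs => rw [h2]
      rw [Finsupp.sum_add_index' (fun _ => rfl) (fun _ _ _ => rfl)]
      simp
    rw [Finsupp.sum] at h1 h3
    have h4 : ((m - Finsupp.single i 1).sum fun _ e => e) ≤ d - 1 := by
      have : (m.sum fun _ e => e) ≤ d := h1
      simp only [Finsupp.sum] at this h3 ⊢
      omega
    exact h4

/-! ### Upper bound for the integral of `φ' ∘ f` -/

theorem convex_level {n : ℕ} (s : ℝ) (hs : 0 ≤ s) (r : (Fin n → ℝ) → ℝ)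
    (hconc : ∀ x y α, 0 ≤ α → α ≤ 1 → 0 < r x → 0 < r y →
      smean s α (r x) (r y) ≤ r (α • x + (1 - α) • y)) (t : ℝ) (ht : 0 ≤ t) :
    Convex ℝ {x | t < r x} := by
  intro x hx y hy a b ha hb hab
  have hx' : t < r x := hx
  have hy' : t < r y := hy
  obtain rfl : b = 1 - a := by linarith
  have hm : 0 < min (r x) (r y) := lt_min (ht.trans_lt hx') (ht.trans_lt hy')
  show t < r (a • x + (1 - a) • y)
  calc t < min (r x) (r y) := lt_min hx' hy'
    _ = min (r x) (r y) ^ a * min (r x) (r y) ^ (1 - a) := by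
        rw [← Real.rpow_add hm]; simp
    _ ≤ r x ^ a * r y ^ (1 - a) := by
        gcongr
        · exact Real.rpow_nonneg (ht.trans hx'.le) _
        · exact min_le_left _ _
        · exact min_le_right _ _
    _ ≤ smean s a (r x) (r y) :=
        geom_le_smean hs ha (by linarith) (ht.trans_lt hx') (ht.trans_lt hy')
    _ ≤ _ := hconc x y a ha (by linarith) (ht.trans_lt hx') (ht.trans_lt hy')

theorem measurable_eval {n : ℕ} (f : MvPolynomial (Fin n) ℝ) :
    Measurable fun x : Fin n → ℝ => MvPolynomial.eval x f :=
  (MvPolynomial.continuous_eval f).measurable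

/-- If `|q| ≥ M` at a point of the core `{r > T / 4}`, then `|q| < M * u ^ m` only on a set whose measure
with density `r` is at most a dimensional multiple of `u`. It is applied to a directional
derivative of `f`. -/
theorem gradient_small {n : ℕ} (r : (Fin n → ℝ) → ℝ) (T : ℝ) (hr : Measurable r)
    (hrT : ∀ x, r x ≤ T) (hT : 0 < T) (hint : ∫⁻ x, ENNReal.ofReal (r x) = 1)
    (hconv : ∀ t, 0 ≤ t → Convex ℝ {x | t < r x}) (p : Fin n → ℝ) (hp : T / 4 < r p)
    (q : MvPolynomial (Fin n) ℝ) (m : ℕ) (hq : q.totalDegree ≤ m) (M u : ℝ) (hM : 0 < M)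
    (hMp : M ≤ |MvPolynomial.eval p q|) (hu : 0 < u) :
    ∫⁻ x, {x | |MvPolynomial.eval x q| < M * u ^ m}.indicator 1 x * ENNReal.ofReal (r x) ≤
      ENNReal.ofReal (60 * 2 ^ n * u) := by
  set S := {x | |MvPolynomial.eval x q| < M * u ^ m} with hS
  have hSm : MeasurableSet S :=
    measurableSet_lt (by simpa using (measurable_eval q).norm) measurable_const
  have h1 : ∀ v : Fin n → ℝ, volume {t : ℝ | t ∈ Set.Icc (0 : ℝ) 1 ∧ p + t • v ∈ S} ≤
      ENNReal.ofReal (2 * Real.exp 1 * u) := by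
    intro v
    have h2 := sublevel_bound (linePoly q p v) m (linePoly_natDegree q p v m hq) M u hM
      (by rw [linePoly_eval]; simpa using hMp) hu
    simpa only [linePoly_eval, hS, Set.mem_ofPred_eq] using h2
  have h3 := layer_le r T hr hrT hint (S.indicator 1) 0 (measurable_one.indicator hSm)
    measurable_zero (2 * ENNReal.ofReal (2 * Real.exp 1 * u) * 2 ^ n) (by
      intro t ht htT
      have hmin : 0 ≤ min t (T / 4) := le_min ht.le (by positivity)
      have hK : MeasurableSet {x | t < r x} := measurableSet_lt measurable_const hr
      have hL : MeasurableSet {x | min t (T / 4) < r x} := measurableSet_lt measurable_const hr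
      rw [lintegral_indicator_one hSm, Measure.restrict_apply hSm]
      refine le_add_right (le_trans (measure_mono ?_)
        (volume_sublevel_le {x | min t (T / 4) < r x} S hL hSm (hconv _ hmin) p
          (lt_of_le_of_lt (min_le_right _ _) hp) _ h1))
      rintro x ⟨h4, h5⟩
      have h5' : t < r x := h5
      exact ⟨h4, show min t (T / 4) < r x from lt_of_le_of_lt (min_le_left _ _) h5'⟩)
  refine h3.trans ?_
  simp only [Pi.zero_apply, zero_mul, lintegral_zero, add_zero]
  calc 5 * (2 * ENNReal.ofReal (2 * Real.exp 1 * u) * 2 ^ n)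
      = ENNReal.ofReal (5 * (2 * (2 * Real.exp 1 * u) * 2 ^ n)) := by
        rw [ENNReal.ofReal_mul (p := 5) (by norm_num),
          ENNReal.ofReal_mul (p := 2 * (2 * Real.exp 1 * u)) (by positivity),
          ENNReal.ofReal_mul (p := 2) (q := 2 * Real.exp 1 * u) (by norm_num),
          ENNReal.ofReal_pow (by norm_num)]
        simp only [ENNReal.ofReal_ofNat]
    _ ≤ _ := by
        apply ENNReal.ofReal_le_ofReal
        have h6 : Real.exp 1 ≤ 3 := by linarith [Real.exp_one_lt_d9]
        have h7 : 0 < 2 ^ n * u := by positivity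
        nlinarith

/-- The upper bound `∫ φ'(f) dμ ≤ 120 * 2 ^ n * b * u`, in the form shifted by `b`. Here
`M = |f y - f z|` for `y` and `z` in the core, and `u` is tied to `M` by the balance
`b * M * u ^ d = a * d`. -/
theorem main_ineq {n : ℕ} (r : (Fin n → ℝ) → ℝ) (T : ℝ) (hr : Measurable r)
    (hrT : ∀ x, r x ≤ T) (hT : 0 < T) (hint : ∫⁻ x, ENNReal.ofReal (r x) = 1)
    (hconv : ∀ t, 0 ≤ t → Convex ℝ {x | t < r x}) (z y : Fin n → ℝ) (hz : T / 4 < r z)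
    (hy : T / 4 < r y) (φ : ℝ → ℝ) (hφ : ContDiff ℝ 1 φ) (a b : ℝ)
    (hb : 0 < b) (hφa : ∀ t, |φ t| ≤ a) (hφb : ∀ t, |deriv φ t| ≤ b)
    (f : MvPolynomial (Fin n) ℝ) (d : ℕ) (hd : 0 < d) (hf : f.totalDegree ≤ d) (u : ℝ)
    (hu : 0 < u) (hM : 0 < |MvPolynomial.eval y f - MvPolynomial.eval z f|)
    (hbu : b * |MvPolynomial.eval y f - MvPolynomial.eval z f| * u ^ d = a * d) :
    ∫⁻ x, ENNReal.ofReal (b + deriv φ (MvPolynomial.eval x f)) * ENNReal.ofReal (r x) ≤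
      ENNReal.ofReal (b + 120 * 2 ^ n * b * u) := by
  set M := |MvPolynomial.eval y f - MvPolynomial.eval z f| with hMdef
  set e := y - z with he
  set q := dirDeriv f e with hqdef
  have hq : q.totalDegree ≤ d - 1 := dirDeriv_totalDegree f e d hf
  -- a point `p` on the segment `[z, y]` at which the derivative along `e` is as large as `M`
  obtain ⟨p, hp, hpM⟩ : ∃ p, T / 4 < r p ∧ M ≤ |MvPolynomial.eval p q| := by
    obtain ⟨τ, hτ, hτd⟩ := exists_deriv_eq_slope (fun t => (linePoly f z e).eval t)
      (zero_lt_one' ℝ) (Polynomial.continuous _).continuousOn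
      (Polynomial.differentiable _).differentiableOn
    refine ⟨z + τ • e, ?_, ?_⟩
    · have := hconv (T / 4) (by positivity) hz hy (a := 1 - τ) (b := τ) (by linarith [hτ.2]) hτ.1.le
        (by ring)
      show z + τ • e ∈ {x | T / 4 < r x}
      convert this using 1
      rw [he]; module
    · rw [Polynomial.deriv, linePoly_derivative, linePoly_eval, linePoly_eval, linePoly_eval] at hτd
      rw [hτd, he, hMdef]
      simp
  set ε := M * u ^ (d - 1) with hε
  have hεpos : 0 < ε := by positivity
  -- with this `ε` the cost of the region `|∂_e f| ≥ ε` is proportional to `b * u`, as is that of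
  -- the region `|∂_e f| < ε`
  have hA : 12 * d * a / ε = 12 * (b * u) := by
    rw [div_eq_iff hεpos.ne', hε]
    have : u ^ d = u * u ^ (d - 1) := by rw [← pow_succ', Nat.sub_add_cancel hd]
    rw [this] at hbu
    linear_combination (-12) * hbu
  set S := {x | |MvPolynomial.eval x q| < ε} with hS
  have hSm : MeasurableSet S :=
    measurableSet_lt (by simpa using (measurable_eval q).norm) measurable_const
  have hF : Measurable fun x : Fin n → ℝ =>
      ENNReal.ofReal (b + deriv φ (MvPolynomial.eval x f)) :=
    (measurable_const.add ((measurable_deriv φ).comp (measurable_eval f))).ennreal_ofReal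
  have hI : Measurable (S.indicator (1 : (Fin n → ℝ) → ENNReal)) := measurable_one.indicator hSm
  have hH : Measurable fun x : Fin n → ℝ =>
      ENNReal.ofReal b * (1 + S.indicator (1 : (Fin n → ℝ) → ENNReal) x) :=
    (measurable_const.add hI).const_mul _
  have h1 := layer_le r T hr hrT hint _ _ hF hH (ENNReal.ofReal (12 * (b * u)) * 2 ^ n) (by
    intro t ht htT
    have hmin : 0 ≤ min t (T / 4) := le_min ht.le (by positivity)
    have hK : MeasurableSet {x | t < r x} := measurableSet_lt measurable_const hr
    refine (slice_le {x | t < r x} hK (hconv t ht.le) e _ _ hF hH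
      (ENNReal.ofReal (12 * (b * u))) ?_).trans ?_
    · intro x J hJ hJ1
      have h2 := interval_bound φ hφ a b ε hεpos hφa hφb (linePoly f x e) d hd
        (linePoly_natDegree f x e d hf) J hJ hJ1
      rw [hA] at h2
      simp only [linePoly_derivative, linePoly_eval] at h2
      exact h2
    · rw [mul_assoc (ENNReal.ofReal _)]
      gcongr
      exact volume_sweep_le _ _ (fun x (hx : t < r x) => lt_of_le_of_lt (min_le_left _ _) hx)
        (hconv _ hmin) z y (lt_of_le_of_lt (min_le_right _ _) hz)
        (lt_of_le_of_lt (min_le_right _ _) hy))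
  refine h1.trans ?_
  have h3 := gradient_small r T hr hrT hT hint hconv p hp q (d - 1) hq M u hM hpM hu
  have h4 : ∫⁻ x, ENNReal.ofReal b * (1 + S.indicator (1 : (Fin n → ℝ) → ENNReal) x) *
      ENNReal.ofReal (r x) = ENNReal.ofReal b * (1 + ∫⁻ x, S.indicator 1 x * ENNReal.ofReal (r x)) := by
    simp_rw [mul_assoc, add_mul, one_mul]
    have hsum : Measurable fun x => ENNReal.ofReal (r x) +
        S.indicator (1 : (Fin n → ℝ) → ENNReal) x * ENNReal.ofReal (r x) :=
      hr.ennreal_ofReal.add (hI.mul hr.ennreal_ofReal)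
    rw [lintegral_const_mul _ hsum, lintegral_add_left hr.ennreal_ofReal, hint]
  rw [h4]
  calc 5 * (ENNReal.ofReal (12 * (b * u)) * 2 ^ n) +
        ENNReal.ofReal b * (1 + ∫⁻ x, S.indicator 1 x * ENNReal.ofReal (r x))
      ≤ 5 * (ENNReal.ofReal (12 * (b * u)) * 2 ^ n) +
        ENNReal.ofReal b * (1 + ENNReal.ofReal (60 * 2 ^ n * u)) := by gcongr
    _ = ENNReal.ofReal (5 * (12 * (b * u) * 2 ^ n) + b * (1 + 60 * 2 ^ n * u)) := by
        rw [ENNReal.ofReal_add (by positivity) (by positivity),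
          ENNReal.ofReal_mul (p := 5) (by norm_num),
          ENNReal.ofReal_mul (p := 12 * (b * u)) (q := 2 ^ n) (by positivity), ENNReal.ofReal_mul hb.le,
          ENNReal.ofReal_add (p := 1) (by norm_num) (by positivity),
          ENNReal.ofReal_pow (by norm_num)]
        simp only [ENNReal.ofReal_ofNat, ENNReal.ofReal_one]
    _ = _ := by congr 1; ring

/-! ### Second moments -/

/-- If `f` differs from `f z` by at most `M` on the initial fraction `l` of the segment from `z` to
`x`, then `f x` is controlled by `growth_bound`. -/
theorem growth_from_segment {n : ℕ} (f : MvPolynomial (Fin n) ℝ) (d : ℕ) (hd : 0 < d)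
    (hf : f.totalDegree ≤ d) (z x : Fin n → ℝ) (M l : ℝ) (hl : 0 < l) (hl1 : l ≤ 1) (hM : 0 ≤ M)
    (h : ∀ t, 0 ≤ t → t ≤ l →
      |MvPolynomial.eval (t • x + (1 - t) • z) f - MvPolynomial.eval z f| ≤ M) :
    |MvPolynomial.eval x f - MvPolynomial.eval z f| ≤ M * (2 * Real.exp 1 / l) ^ d := by
  have h1 := growth_bound (linePoly f z (x - z) - Polynomial.C (MvPolynomial.eval z f)) d hd
    (by rw [Polynomial.natDegree_sub_C]; exact linePoly_natDegree f z _ d hf) l M hl hl1 hM (by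
      intro t ht htl
      rw [Polynomial.eval_sub, linePoly_eval, Polynomial.eval_C,
        show z + t • (x - z) = t • x + (1 - t) • z by module]
      exact h t ht htl)
  rw [Polynomial.eval_sub, linePoly_eval, Polynomial.eval_C] at h1
  simpa using h1

/-- Growth of `f` away from the core. With `L = log (T / r x)`, the point at fraction
`t ≤ 1 / (2 * (1 + L))` of the segment from `z` to `x` lies in the core `{r > T / 4}`, by
log-concavity. -/
theorem growth_logconcave {n : ℕ} (s : ℝ) (hs : 0 ≤ s) (r : (Fin n → ℝ) → ℝ) (T : ℝ) (hT : 0 < T)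
    (hrT : ∀ x, r x ≤ T) (hconc : ∀ x y α, 0 ≤ α → α ≤ 1 → 0 < r x → 0 < r y →
      smean s α (r x) (r y) ≤ r (α • x + (1 - α) • y)) (z : Fin n → ℝ) (hz : T / 2 < r z)
    (f : MvPolynomial (Fin n) ℝ) (d : ℕ) (hd : 0 < d) (hf : f.totalDegree ≤ d) (M : ℝ)
    (hM : ∀ y, T / 4 < r y → |MvPolynomial.eval y f - MvPolynomial.eval z f| ≤ M)
    (x : Fin n → ℝ) (hx : 0 < r x) :
    |MvPolynomial.eval x f - MvPolynomial.eval z f| ≤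
      M * (4 * Real.exp 1 * (1 + (Real.log T - Real.log (r x)))) ^ d := by
  have hM0 : 0 ≤ M := (abs_nonneg _).trans (hM z (by linarith))
  have hz0 : 0 < r z := by linarith
  set L := Real.log T - Real.log (r x) with hL
  have hL0 : 0 ≤ L := sub_nonneg.2 (Real.log_le_log hx (hrT x))
  have h1 := growth_from_segment f d hd hf z x M (1 / (2 * (1 + L))) (by positivity)
    (by rw [div_le_one (by positivity)]; linarith) hM0 (by
      intro t ht htl
      have ht1 : t * (2 * (1 + L)) ≤ 1 := by rwa [le_div_iff₀ (by positivity)] at htl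
      have ht2 : t ≤ 1 / 2 := by nlinarith
      refine hM _ (lt_of_lt_of_le ?_ (hconc x z t ht (by linarith) hx hz0))
      refine lt_of_lt_of_le ?_ (geom_le_smean hs ht (by linarith) hx hz0)
      rw [← Real.log_lt_log_iff (by positivity) (by positivity),
        Real.log_mul (by positivity) (by positivity), Real.log_rpow hx, Real.log_rpow hz0,
        Real.log_div hT.ne' (by norm_num)]
      have h4 : Real.log 4 = 2 * Real.log 2 := by
        rw [show (4 : ℝ) = 2 ^ 2 by norm_num, Real.log_pow]; norm_num
      have h5 : Real.log T - Real.log 2 ≤ Real.log (r z) := by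
        rw [← Real.log_div hT.ne' (by norm_num)]
        exact Real.log_le_log (by positivity) hz.le
      have h6 := Real.log_two_gt_d9
      have h7 : Real.log (r x) = Real.log T - L := by rw [hL]; ring
      rw [h4, h7]
      have h8 : (1 - t) * (Real.log T - Real.log 2) ≤ (1 - t) * Real.log (r z) := by gcongr; linarith
      nlinarith)
  refine h1.trans_eq ?_
  congr 2
  field_simp
  ring

/-- For `s > 0` the segment from `z` to `x` stays in the core up to the fraction `s / 2`, whatever the
value of `r x > 0`, because `(1 - s / 2) ^ (1 / s) ≥ 1 / 2` by Bernoulli's inequality. -/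
theorem growth_sconcave {n : ℕ} (s : ℝ) (hs : 0 < s) (hs1 : s ≤ 1) (r : (Fin n → ℝ) → ℝ) (T : ℝ)
    (hT : 0 < T) (hconc : ∀ x y α, 0 ≤ α → α ≤ 1 → 0 < r x → 0 < r y →
      smean s α (r x) (r y) ≤ r (α • x + (1 - α) • y)) (z : Fin n → ℝ) (hz : T / 2 < r z)
    (f : MvPolynomial (Fin n) ℝ) (d : ℕ) (hd : 0 < d) (hf : f.totalDegree ≤ d) (M : ℝ)
    (hM : ∀ y, T / 4 < r y → |MvPolynomial.eval y f - MvPolynomial.eval z f| ≤ M)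
    (x : Fin n → ℝ) (hx : 0 < r x) :
    |MvPolynomial.eval x f - MvPolynomial.eval z f| ≤ M * (4 * Real.exp 1 * s⁻¹) ^ d := by
  have hM0 : 0 ≤ M := (abs_nonneg _).trans (hM z (by linarith))
  have hz0 : 0 < r z := by linarith
  have h1 := growth_from_segment f d hd hf z x M (s / 2) (by positivity) (by linarith) hM0 (by
      intro t ht htl
      refine hM _ (lt_of_lt_of_le ?_ (hconc x z t ht (by linarith) hx hz0))
      rw [smean, if_neg hs.ne']
      have h2 : (1 : ℝ) / 2 ≤ (1 - s / 2) ^ s⁻¹ := by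
        have h3 := one_add_mul_self_le_rpow_one_add (s := -(s / 2)) (by linarith) (p := s⁻¹)
          ((one_le_inv₀ hs).2 hs1)
        have h4 : 1 + s⁻¹ * -(s / 2) = 1 / 2 := by field_simp; norm_num
        rw [h4] at h3
        rwa [sub_eq_add_neg]
      calc T / 4 < 1 / 2 * r z := by linarith
        _ ≤ (1 - s / 2) ^ s⁻¹ * r z := by gcongr
        _ = ((1 - s / 2) * r z ^ s) ^ s⁻¹ := by
            rw [Real.mul_rpow (by linarith) (by positivity), Real.rpow_rpow_inv hz0.le hs.ne']
        _ ≤ (t * r x ^ s + (1 - t) * r z ^ s) ^ s⁻¹ := by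
            have h5 : 0 ≤ t * r x ^ s := by positivity
            have h6 : (1 - s / 2) * r z ^ s ≤ (1 - t) * r z ^ s := by gcongr
            refine Real.rpow_le_rpow (mul_nonneg (by linarith) (by positivity)) (by linarith)
              (by positivity))
  refine h1.trans_eq ?_
  congr 2
  field_simp
  ring

/-- The second moment of `f - f z` in terms of the oscillation `M` of `f` on the core, with a factor
`d ^ d`. It also holds for `s > 0`, where `s`-concavity implies log-concavity. -/
theorem second_moment_logconcave {n : ℕ} (s : ℝ) (hs : 0 ≤ s) (r : (Fin n → ℝ) → ℝ) (T : ℝ)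
    (hT : 0 < T) (hr : Measurable r) (hr0 : ∀ x, 0 ≤ r x) (hrT : ∀ x, r x ≤ T)
    (hint : ∫⁻ x, ENNReal.ofReal (r x) = 1)
    (hconc : ∀ x y α, 0 ≤ α → α ≤ 1 → 0 < r x → 0 < r y →
      smean s α (r x) (r y) ≤ r (α • x + (1 - α) • y)) (z : Fin n → ℝ) (hz : T / 2 < r z)
    (f : MvPolynomial (Fin n) ℝ) (d : ℕ) (hd : 0 < d) (hf : f.totalDegree ≤ d) (M : ℝ)
    (hM : ∀ y, T / 4 < r y → |MvPolynomial.eval y f - MvPolynomial.eval z f| ≤ M) :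
    ∫⁻ x, ENNReal.ofReal ((MvPolynomial.eval x f - MvPolynomial.eval z f) ^ 2) *
      ENNReal.ofReal (r x) ≤ ENNReal.ofReal ((M * (64 * Real.exp 1 * 2 ^ n * d) ^ d) ^ 2) := by
  have hM0 : 0 ≤ M := (abs_nonneg _).trans (hM z (by linarith))
  have hz0 : 0 < r z := by linarith
  have hd' : (0 : ℝ) < d := by exact_mod_cast hd
  set B := M * (16 * Real.exp 1 * d) ^ d with hB
  have hpt : ∀ x, (MvPolynomial.eval x f - MvPolynomial.eval z f) ^ 2 * r x ≤
      B ^ 2 * 4 * r ((1 / 2 : ℝ) • x + (1 / 2 : ℝ) • z) := by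
    intro x
    rcases (hr0 x).eq_or_lt with hx | hx
    · rw [← hx, mul_zero]
      have := hr0 ((1 / 2 : ℝ) • x + (1 / 2 : ℝ) • z)
      positivity
    have h1 := growth_logconcave s hs r T hT hrT hconc z hz f d hd hf M hM x hx
    set L := Real.log T - Real.log (r x) with hL
    have hL0 : 0 ≤ L := sub_nonneg.2 (Real.log_le_log hx (hrT x))
    have h2 : (MvPolynomial.eval x f - MvPolynomial.eval z f) ^ 2 ≤
        (M * (4 * Real.exp 1 * (1 + L)) ^ d) ^ 2 := by
      rw [← sq_abs]; gcongr
    -- `1 + L ≤ 4 d exp ((1 + L) / (4 d))` turns the power of `1 + L` into half an exponential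
    have h3 : ((1 + L) ^ d) ^ 2 ≤ ((4 * d : ℝ) ^ d) ^ 2 * Real.exp ((1 + L) / 2) := by
      have h4 : (1 + L) / (4 * d) ≤ Real.exp ((1 + L) / (4 * d)) := by
        linarith [Real.add_one_le_exp ((1 + L) / (4 * d))]
      have h5 : 1 + L ≤ 4 * d * Real.exp ((1 + L) / (4 * d)) := by
        rw [div_le_iff₀ (by positivity)] at h4
        linarith
      have h6 : ((1 + L) ^ d) ^ 2 ≤ ((4 * d * Real.exp ((1 + L) / (4 * d))) ^ d) ^ 2 := by gcongr
      refine h6.trans_eq ?_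
      rw [mul_pow, mul_pow]
      congr 1
      rw [← Real.exp_nat_mul, ← Real.exp_nat_mul]
      congr 1
      field_simp
      norm_num
    -- `exp (L / 2) * r x = √(T * r x)`, and `T ≤ 2 * r z`
    have h7 : Real.exp ((1 + L) / 2) * r x ≤ 4 * r ((1 / 2 : ℝ) • x + (1 / 2 : ℝ) • z) := by
      have h8 : r x ^ (1 / 2 : ℝ) * r z ^ (1 - 1 / 2 : ℝ) ≤
          r ((1 / 2 : ℝ) • x + (1 - 1 / 2 : ℝ) • z) :=
        (geom_le_smean hs (by norm_num) (by norm_num) hx hz0).trans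
          (hconc x z (1 / 2) (by norm_num) (by norm_num) hx hz0)
      rw [show (1 - 1 / 2 : ℝ) = 1 / 2 by norm_num] at h8
      have h9 : Real.log T ≤ Real.log 2 + Real.log (r z) := by
        rw [← Real.log_mul (by norm_num) hz0.ne']
        exact Real.log_le_log hT (by linarith)
      have h10 := Real.log_two_lt_d9
      calc Real.exp ((1 + L) / 2) * r x = Real.exp ((1 + L) / 2 + Real.log (r x)) := by
            rw [Real.exp_add, Real.exp_log hx]
        _ ≤ Real.exp (1 + (Real.log (r x) * (1 / 2) + Real.log (r z) * (1 / 2))) := by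
            apply Real.exp_le_exp.2
            rw [hL]; linarith
        _ = Real.exp 1 * (r x ^ (1 / 2 : ℝ) * r z ^ (1 / 2 : ℝ)) := by
            rw [Real.exp_add, Real.exp_add, Real.rpow_def_of_pos hx, Real.rpow_def_of_pos hz0]
        _ ≤ 4 * r ((1 / 2 : ℝ) • x + (1 / 2 : ℝ) • z) := by
            have := Real.exp_one_lt_d9
            gcongr
            linarith
    calc (MvPolynomial.eval x f - MvPolynomial.eval z f) ^ 2 * r x
        ≤ (M * (4 * Real.exp 1 * (1 + L)) ^ d) ^ 2 * r x := by gcongr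
      _ = (M * (4 * Real.exp 1) ^ d) ^ 2 * ((1 + L) ^ d) ^ 2 * r x := by
          rw [mul_pow (4 * Real.exp 1) (1 + L) d]; ring
      _ ≤ (M * (4 * Real.exp 1) ^ d) ^ 2 * (((4 * d : ℝ) ^ d) ^ 2 * Real.exp ((1 + L) / 2)) * r x := by
          gcongr
      _ = B ^ 2 * (Real.exp ((1 + L) / 2) * r x) := by
          rw [hB, show 16 * Real.exp 1 * (d : ℝ) = (4 * Real.exp 1) * (4 * d) by ring,
            mul_pow (4 * Real.exp 1) (4 * (d : ℝ)) d]
          ring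
      _ ≤ B ^ 2 * (4 * r ((1 / 2 : ℝ) • x + (1 / 2 : ℝ) • z)) := by gcongr
      _ = _ := by ring
  have hlin := lintegral_affine (n := n) (1 / 2) (by norm_num) ((1 / 2 : ℝ) • z)
    (fun x => ENNReal.ofReal (r x)) hr.ennreal_ofReal
  rw [hint, mul_one] at hlin
  have hra : Measurable fun x => ENNReal.ofReal (r ((1 / 2 : ℝ) • x + (1 / 2 : ℝ) • z)) :=
    (hr.comp (by fun_prop : Measurable fun x : Fin n → ℝ =>
      (1 / 2 : ℝ) • x + (1 / 2 : ℝ) • z)).ennreal_ofReal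
  calc ∫⁻ x, ENNReal.ofReal ((MvPolynomial.eval x f - MvPolynomial.eval z f) ^ 2) *
      ENNReal.ofReal (r x)
      ≤ ∫⁻ x, ENNReal.ofReal (B ^ 2 * 4) *
          ENNReal.ofReal (r ((1 / 2 : ℝ) • x + (1 / 2 : ℝ) • z)) := by
        refine lintegral_mono fun x => ?_
        rw [← ENNReal.ofReal_mul (by positivity), ← ENNReal.ofReal_mul (by positivity)]
        exact ENNReal.ofReal_le_ofReal (hpt x)
    _ = ENNReal.ofReal (B ^ 2 * 4 * 2 ^ n) := by
        rw [lintegral_const_mul _ hra, hlin, ← ENNReal.ofReal_mul (by positivity),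
          abs_of_pos (by positivity)]
        simp
    _ ≤ _ := by
        apply ENNReal.ofReal_le_ofReal
        have h1 : (1 : ℝ) ≤ 4 * 2 ^ n := by
          have : (1 : ℝ) ≤ 2 ^ n := one_le_pow₀ (by norm_num)
          linarith
        have h2 : (4 * 2 ^ n : ℝ) ≤ ((4 * 2 ^ n) ^ d) ^ 2 := by
          rw [← pow_mul]
          exact le_self_pow₀ h1 (by omega)
        calc B ^ 2 * 4 * 2 ^ n = B ^ 2 * (4 * 2 ^ n) := by ring
          _ ≤ B ^ 2 * ((4 * 2 ^ n) ^ d) ^ 2 := by gcongr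
          _ = _ := by
            rw [hB, show 64 * Real.exp 1 * 2 ^ n * (d : ℝ) =
              (16 * Real.exp 1 * d) * (4 * 2 ^ n) by ring,
              mul_pow (16 * Real.exp 1 * (d : ℝ)) (4 * 2 ^ n) d]
            ring

/-- The same bound with `1 / s` in place of `d`, from the pointwise estimate `growth_sconcave`. -/
theorem second_moment_sconcave {n : ℕ} (s : ℝ) (hs : 0 < s) (hs1 : s ≤ 1) (r : (Fin n → ℝ) → ℝ)
    (T : ℝ) (hT : 0 < T) (hr : Measurable r) (hint : ∫⁻ x, ENNReal.ofReal (r x) = 1)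
    (hconc : ∀ x y α, 0 ≤ α → α ≤ 1 → 0 < r x → 0 < r y →
      smean s α (r x) (r y) ≤ r (α • x + (1 - α) • y)) (z : Fin n → ℝ) (hz : T / 2 < r z)
    (f : MvPolynomial (Fin n) ℝ) (d : ℕ) (hd : 0 < d) (hf : f.totalDegree ≤ d) (M : ℝ)
    (hM : ∀ y, T / 4 < r y → |MvPolynomial.eval y f - MvPolynomial.eval z f| ≤ M) :
    ∫⁻ x, ENNReal.ofReal ((MvPolynomial.eval x f - MvPolynomial.eval z f) ^ 2) *
      ENNReal.ofReal (r x) ≤ ENNReal.ofReal ((M * (64 * Real.exp 1 * 2 ^ n * s⁻¹) ^ d) ^ 2) := by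
  have hM0 : 0 ≤ M := (abs_nonneg _).trans (hM z (by linarith))
  calc ∫⁻ x, ENNReal.ofReal ((MvPolynomial.eval x f - MvPolynomial.eval z f) ^ 2) *
      ENNReal.ofReal (r x)
      ≤ ∫⁻ x, ENNReal.ofReal ((M * (4 * Real.exp 1 * s⁻¹) ^ d) ^ 2) * ENNReal.ofReal (r x) := by
        refine lintegral_mono fun x => ?_
        rcases le_or_gt (r x) 0 with hx | hx
        · simp [ENNReal.ofReal_of_nonpos hx]
        · have h1 := growth_sconcave s hs hs1 r T hT hconc z hz f d hd hf M hM x hx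
          rw [← sq_abs]
          gcongr
    _ = ENNReal.ofReal ((M * (4 * Real.exp 1 * s⁻¹) ^ d) ^ 2) := by
        rw [lintegral_const_mul _ hr.ennreal_ofReal, hint, mul_one]
    _ ≤ _ := by
        have h1 : (1 : ℝ) ≤ 2 ^ n := one_le_pow₀ (by norm_num)
        have h2 : 4 * Real.exp 1 ≤ 64 * Real.exp 1 * 2 ^ n := by
          nlinarith [Real.exp_pos 1]
        gcongr

theorem variance_of_second_moment {n : ℕ} (μ : Measure (Fin n → ℝ)) [IsProbabilityMeasure μ]
    (f : MvPolynomial (Fin n) ℝ) (c V : ℝ)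
    (h : ∫⁻ x, ENNReal.ofReal ((MvPolynomial.eval x f - c) ^ 2) ∂μ ≤ ENNReal.ofReal (V ^ 2)) :
    ∫ x, (MvPolynomial.eval x f - ∫ y, MvPolynomial.eval y f ∂μ) ^ 2 ∂μ ≤ V ^ 2 := by
  have hm : AEStronglyMeasurable (fun x => MvPolynomial.eval x f) μ :=
    (measurable_eval f).aestronglyMeasurable
  have hm' : AEStronglyMeasurable (fun x => MvPolynomial.eval x f - c) μ :=
    ((measurable_eval f).sub_const c).aestronglyMeasurable
  rw [← ProbabilityTheory.variance_eq_integral hm.aemeasurable,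
    ← ProbabilityTheory.variance_sub_const hm c]
  refine (ProbabilityTheory.variance_le_expectation_sq hm').trans ?_
  show ∫ x, (MvPolynomial.eval x f - c) ^ 2 ∂μ ≤ V ^ 2
  rw [integral_eq_lintegral_of_nonneg_ae (Filter.Eventually.of_forall fun x => sq_nonneg _)
    (hm'.pow 2)]
  exact ENNReal.toReal_le_of_le_ofReal (sq_nonneg V) h

/-! ### Extracting the oscillation -/

theorem CbSmooth.contDiff_one {φ : ℝ → ℝ} (h : CbSmooth φ) : ContDiff ℝ 1 φ :=
  h.1.of_le (by exact_mod_cast le_top)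

theorem CbSmooth.abs_le {φ : ℝ → ℝ} (h : CbSmooth φ) (t : ℝ) : |φ t| ≤ supNorm φ := by
  obtain ⟨M, hM⟩ := h.2 0
  exact le_ciSup (f := fun t => |φ t|) ⟨M, by rintro _ ⟨t, rfl⟩; simpa using hM t⟩ t

theorem CbSmooth.abs_deriv_le {φ : ℝ → ℝ} (h : CbSmooth φ) (t : ℝ) :
    |deriv φ t| ≤ supNorm (deriv φ) := by
  obtain ⟨M, hM⟩ := h.2 1
  exact le_ciSup (f := fun t => |deriv φ t|) ⟨M, by rintro _ ⟨t, rfl⟩; simpa using hM t⟩ t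

/-- The bound `I ≤ C₀ * b * u`, for the `u` solving `b * M * u ^ d = a * d`, solved for `M`. The factor
`d` is absorbed by `d ≤ 2 ^ d`. -/
theorem oscillation_le (d : ℕ) (hd : 0 < d) (a b I M C₀ : ℝ) (ha : 0 < a) (hb : 0 < b)
    (hI : 0 < I) (hM : 0 < M) (hC : 0 < C₀)
    (h : ∀ u, 0 < u → b * M * u ^ d = a * d → I ≤ C₀ * b * u) :
    M ≤ (2 * C₀ * a ^ (1 / (d : ℝ)) * b ^ (1 - 1 / (d : ℝ)) / I) ^ d := by
  have hd' : (0 : ℝ) < d := by exact_mod_cast hd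
  set u := (a * d / (b * M)) ^ (1 / (d : ℝ)) with hu
  have hu0 : 0 < u := by positivity
  have hud : u ^ d = a * d / (b * M) := by
    rw [hu, one_div]; exact Real.rpow_inv_natCast_pow (by positivity) hd.ne'
  have h1 := h u hu0 (by rw [hud]; field_simp)
  have had : (a ^ (1 / (d : ℝ))) ^ d = a := by
    rw [one_div]; exact Real.rpow_inv_natCast_pow ha.le hd.ne'
  have hbd : (b ^ (1 - 1 / (d : ℝ))) ^ d * b = b ^ d := by
    rw [← Real.rpow_mul_natCast hb.le, ← Real.rpow_natCast b d, ← Real.rpow_add_one hb.ne']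
    congr 1
    field_simp
    ring
  have h2 : I ^ d ≤ C₀ ^ d * b ^ d * (a * d / (b * M)) := by
    rw [← hud, ← mul_pow, ← mul_pow]; gcongr
  have h3 : (d : ℝ) ≤ 2 ^ d := by exact_mod_cast Nat.lt_two_pow_self.le
  rw [div_pow, le_div_iff₀ (by positivity), mul_pow, mul_pow, mul_pow, had]
  set β := (b ^ (1 - 1 / (d : ℝ))) ^ d with hβ
  have hβ0 : 0 ≤ β := by positivity
  calc M * I ^ d ≤ M * (C₀ ^ d * b ^ d * (a * d / (b * M))) := by gcongr
    _ = d * C₀ ^ d * a * β := by rw [← hbd]; field_simp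
    _ ≤ 2 ^ d * C₀ ^ d * a * β := by gcongr

/-- Passage from the shifted integral `∫⁻` of `b + φ'(f)` back to the Bochner integral of `φ'(f)`. -/
theorem integral_deriv_le {n : ℕ} (μ : Measure (Fin n → ℝ)) [IsProbabilityMeasure μ] (φ : ℝ → ℝ)
    (b B : ℝ) (hB : 0 ≤ B) (hφb : ∀ t, |deriv φ t| ≤ b) (f : MvPolynomial (Fin n) ℝ)
    (h : ∫⁻ x, ENNReal.ofReal (b + deriv φ (MvPolynomial.eval x f)) ∂μ ≤ ENNReal.ofReal (b + B)) :
    ∫ x, deriv φ (MvPolynomial.eval x f) ∂μ ≤ B := by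
  have hb : 0 ≤ b := (abs_nonneg _).trans (hφb 0)
  have hm : Measurable fun x : Fin n → ℝ => deriv φ (MvPolynomial.eval x f) :=
    (measurable_deriv φ).comp (measurable_eval f)
  have hint : Integrable (fun x => deriv φ (MvPolynomial.eval x f)) μ :=
    Integrable.of_bound hm.aestronglyMeasurable b
      (Filter.Eventually.of_forall fun x => by simpa using hφb _)
  have h1 : ∫ x, (b + deriv φ (MvPolynomial.eval x f)) ∂μ ≤ b + B := by
    rw [integral_eq_lintegral_of_nonneg_ae
      (Filter.Eventually.of_forall fun x => by
        have := neg_le_of_abs_le (hφb (MvPolynomial.eval x f))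
        simp only [Pi.zero_apply]; linarith) (hm.const_add b).aestronglyMeasurable]
    exact ENNReal.toReal_le_of_le_ofReal (by positivity) h
  rw [integral_add (integrable_const b) hint, integral_const, probReal_univ, one_smul] at h1
  linarith

/-- **Dimension-dependent regularity of polynomial images of `s`-concave
measures.**  For every `n ∈ ℕ` there exists `C(n) > 0` such that for every
`s ∈ [0, 1/n]`, every absolutely continuous `s`-concave probability measure `μ`
on `ℝⁿ`, every polynomial `f` of degree at most `d` and every `φ ∈ C_b^∞(ℝ)`,
`‖f - 𝔼_μ f‖_{L²(μ)}^{1/d} ∫ φ'(f(x)) μ(dx)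
  ≤ C(n) min{d, 1/s} ‖φ‖_∞^{1/d} ‖φ'‖_∞^{1-1/d}`
(with `min{d, 1/s} = d` when `s = 0`). -/
theorem sconcave_dim_regularity (n : ℕ) (hn : 0 < n) :
    ∃ C : ℝ, 0 < C ∧ ∀ s : ℝ, 0 ≤ s → s ≤ 1 / n →
      ∀ μ : Measure (Fin n → ℝ), IsProbabilityMeasure μ →
        μ ≪ (volume : Measure (Fin n → ℝ)) → IsSConcave s μ →
      ∀ d : ℕ, 0 < d → ∀ f : MvPolynomial (Fin n) ℝ, f.totalDegree ≤ d →
      ∀ φ : ℝ → ℝ, CbSmooth φ →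
        (∫ x, (MvPolynomial.eval x f - ∫ y, MvPolynomial.eval y f ∂μ) ^ 2 ∂μ) ^
            (1 / (2 * (d : ℝ))) *
            (∫ x, deriv φ (MvPolynomial.eval x f) ∂μ) ≤
          C * (if s = 0 then (d : ℝ) else min (d : ℝ) s⁻¹) *
            supNorm φ ^ (1 / (d : ℝ)) * supNorm (deriv φ) ^ (1 - 1 / (d : ℝ)) := by
  refine ⟨64 * Real.exp 1 * 2 ^ n * (2 * (120 * 2 ^ n)), by positivity, ?_⟩
  intro s hs hsn μ hprob hac hsc d hd f hf φ hφ
  have hd' : (0 : ℝ) < d := by exact_mod_cast hd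
  have hs1 : s ≤ 1 := hsn.trans (by
    have : (1 : ℝ) ≤ n := by exact_mod_cast hn
    rw [div_le_one (by linarith)]; exact this)
  obtain ⟨r, T, z, hr, hr0, hμ, hT, hrT, hz, hconc⟩ := exists_real_density s hs μ hac hsc
  have hlint : ∀ g : (Fin n → ℝ) → ENNReal, Measurable g →
      ∫⁻ x, g x ∂μ = ∫⁻ x, g x * ENNReal.ofReal (r x) := by
    intro g hg
    rw [hμ, lintegral_withDensity_eq_lintegral_mul _ hr.ennreal_ofReal hg]
    exact lintegral_congr fun x => mul_comm _ _
  have hint : ∫⁻ x, ENNReal.ofReal (r x) = 1 := by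
    have := hlint 1 measurable_one
    simpa using this.symm
  have hconv := fun t ht => convex_level s hs r hconc t ht
  set a := supNorm φ with ha
  set b := supNorm (deriv φ) with hb
  have hφa : ∀ t, |φ t| ≤ a := hφ.abs_le
  have hφb : ∀ t, |deriv φ t| ≤ b := hφ.abs_deriv_le
  have ha0 : 0 ≤ a := (abs_nonneg _).trans (hφa 0)
  have hb0 : 0 ≤ b := (abs_nonneg _).trans (hφb 0)
  set w : ℝ := if s = 0 then (d : ℝ) else min (d : ℝ) s⁻¹ with hw
  have hw0 : 0 ≤ w := by
    rw [hw]; split_ifs <;> positivity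
  set I := ∫ x, deriv φ (MvPolynomial.eval x f) ∂μ with hI
  set σ := ∫ x, (MvPolynomial.eval x f - ∫ y, MvPolynomial.eval y f ∂μ) ^ 2 ∂μ with hσ
  have hσ0 : 0 ≤ σ := integral_nonneg fun x => sq_nonneg _
  rcases le_or_gt I 0 with hI0 | hI0
  · exact (mul_nonpos_of_nonneg_of_nonpos (by positivity) hI0).trans (by positivity)
  -- if `φ` or `φ'` vanishes identically, then `I = 0`
  have hbpos : 0 < b := by
    refine hb0.lt_of_ne fun h0 => hI0.ne' ?_
    have : ∀ t, deriv φ t = 0 := fun t => abs_nonpos_iff.1 ((hφb t).trans h0.symm.le)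
    simp [hI, this]
  have hapos : 0 < a := by
    refine ha0.lt_of_ne fun h0 => hI0.ne' ?_
    have : φ = fun _ => 0 := funext fun t => abs_nonpos_iff.1 ((hφa t).trans h0.symm.le)
    simp [hI, this]
  set R := 2 * (120 * 2 ^ n) * a ^ (1 / (d : ℝ)) * b ^ (1 - 1 / (d : ℝ)) with hR
  have hR0 : 0 ≤ R := by positivity
  have hosc : ∀ y, T / 4 < r y →
      |MvPolynomial.eval y f - MvPolynomial.eval z f| ≤ (R / I) ^ d := by
    intro y hy
    rcases (abs_nonneg (MvPolynomial.eval y f - MvPolynomial.eval z f)).eq_or_lt with hM | hM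
    · rw [← hM]; positivity
    refine oscillation_le d hd a b I _ (120 * 2 ^ n) hapos hbpos hI0 hM (by positivity) ?_
    intro u hu hbu
    refine integral_deriv_le μ φ b _ (by positivity) hφb f ?_
    have hF : Measurable fun x : Fin n → ℝ =>
        ENNReal.ofReal (b + deriv φ (MvPolynomial.eval x f)) :=
      (measurable_const.add ((measurable_deriv φ).comp (measurable_eval f))).ennreal_ofReal
    rw [hlint _ hF]
    exact main_ineq r T hr hrT hT hint hconv z y (by linarith) hy φ hφ.contDiff_one a b hbpos hφa
      hφb f d hd hf u hu hM hbu
  have hmom : ∫⁻ x, ENNReal.ofReal ((MvPolynomial.eval x f - MvPolynomial.eval z f) ^ 2) ∂μ ≤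
      ENNReal.ofReal (((R / I) ^ d * (64 * Real.exp 1 * 2 ^ n * w) ^ d) ^ 2) := by
    rw [hlint _ (((measurable_eval f).sub_const _).pow_const 2).ennreal_ofReal]
    have hlc := second_moment_logconcave s hs r T hT hr hr0 hrT hint hconc z hz f d hd hf _ hosc
    rw [hw]
    split_ifs with h0
    · exact hlc
    · rcases min_choice (d : ℝ) s⁻¹ with hm | hm
      · rw [hm]; exact hlc
      · rw [hm]
        exact second_moment_sconcave s (hs.lt_of_ne' h0) hs1 r T hT hr hint hconc z hz f d hd hf _
          hosc
  have hvar := variance_of_second_moment μ f _ _ hmom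
  have hroot : σ ^ (1 / (2 * (d : ℝ))) ≤ R / I * (64 * Real.exp 1 * 2 ^ n * w) := by
    rw [← mul_pow, ← pow_mul] at hvar
    have hX : 0 ≤ R / I * (64 * Real.exp 1 * 2 ^ n * w) := by positivity
    calc σ ^ (1 / (2 * (d : ℝ)))
        ≤ ((R / I * (64 * Real.exp 1 * 2 ^ n * w)) ^ (d * 2)) ^ (1 / (2 * (d : ℝ))) :=
          Real.rpow_le_rpow hσ0 hvar (by positivity)
      _ = R / I * (64 * Real.exp 1 * 2 ^ n * w) := by
          rw [show 1 / (2 * (d : ℝ)) = ((d * 2 : ℕ) : ℝ)⁻¹ by push_cast; rw [one_div, mul_comm]]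
          exact Real.pow_rpow_inv_natCast hX (by omega)
  calc σ ^ (1 / (2 * (d : ℝ))) * I ≤ R / I * (64 * Real.exp 1 * 2 ^ n * w) * I := by gcongr
    _ = R * (64 * Real.exp 1 * 2 ^ n * w) := by field_simp
    _ = _ := by rw [hR]; ring
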